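/- arXiv:2011.13898 — 10 statements merged into one kernel-verified Lean document; each statement's English description precedes it below -/
import Mathlib

section
/- Let Q be a finite group and ω₀ a normalized U(1)-valued 3-cocycle on Q. Then there exist a finite group G, a surjective group homomorphism ρ : G → Q, a normalized U(1)-valued 3-cocycle ω on Q cohomologous to ω₀, and a normalized 2-cochain c : G × G → U(1), such that dc(g₁,g₂,g₃) = ω(ρ(g₁),ρ(g₂),ρ(g₃)) for all g₁,g₂,g₃ ∈ G, and c(k₁,k₂) = 1 for all k₁,k₂ in the kernel of ρ. -/
/-- Auxiliary structure packaging the data produced by the cohomology lemma (Lemma 4.3):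
a finite group `G`, a surjection `ρ : G → Q`, a normalized 3-cocycle `ω` on `Q` cohomologous
to the given `ω₀` (witnessed by the normalized 2-cochain `b`), and a normalized 2-cochain
`c` on `G` with `dc = ρ*(ω)` which is identically `1` on the kernel of `ρ`. -/
structure CohomologyLemmaWitness (Q : Type) [Group Q]
    (ω₀ : Q → Q → Q → Circle) : Type 1 where
  G : Type
  [grp : Group G]
  [fin : Finite G]
  ρ : G →* Q
  surj : Function.Surjective ρ
  ω : Q → Q → Q → Circle
  ω_norm : ∀ g h k, g = 1 ∨ h = 1 ∨ k = 1 → ω g h k = 1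
  ω_coc : ∀ g₁ g₂ g₃ g₄,
    ω (g₁ * g₂) g₃ g₄ * ω g₁ g₂ (g₃ * g₄)
      = ω g₂ g₃ g₄ * ω g₁ (g₂ * g₃) g₄ * ω g₁ g₂ g₃
  b : Q → Q → Circle
  b_norm : ∀ g h, g = 1 ∨ h = 1 → b g h = 1
  cohomologous : ∀ g h l,
    ω g h l * (ω₀ g h l)⁻¹ = (b h l)⁻¹ * b (g * h) l * (b g (h * l))⁻¹ * b g h
  c : G → G → Circle
  c_norm : ∀ g h, g = 1 ∨ h = 1 → c g h = 1
  c_coboundary : ∀ g₁ g₂ g₃,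
    (c g₂ g₃)⁻¹ * c (g₁ * g₂) g₃ * (c g₁ (g₂ * g₃))⁻¹ * c g₁ g₂
      = ω (ρ g₁) (ρ g₂) (ρ g₃)
  c_ker : ∀ k₁ k₂, k₁ ∈ ρ.ker → k₂ ∈ ρ.ker → c k₁ k₂ = 1

namespace CohLem

/-- Multiplicative version of a linear-arithmetic step: transfer to an additive group. -/
lemma assoc_alg {M : Type*} [CommGroup M] (f1 f2x f2g f3x f3gg f3g w1 w2 w3 w4 w5 : M)
    (h : w3 * w5 = w4 * w2 * w1) :
    f1 * f2x * f2g⁻¹ * w1 * f3x * f3gg⁻¹ * w2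
      = f1 * (f2x * f3x * f3g⁻¹ * w3) * (f2g * f3gg * f3g⁻¹ * w4)⁻¹ * w5 := by
  have h' : w3 = w4 * w2 * w1 * w5⁻¹ := by rw [← h]; group
  subst h'
  apply Additive.ofMul.injective
  simp only [ofMul_mul, ofMul_inv]
  abel

variable {Q : Type} [Group Q]

/-- The fibre: normalized functions with values in `n`-th roots of unity. -/
abbrev Fib (Q : Type) [Group Q] (n : ℕ) : Type :=
  {f : Q → Circle // f 1 = 1 ∧ ∀ x, f x ^ n = 1}

/-- The underlying set of the extension. -/
structure Ext (Q : Type) [Group Q] (n : ℕ) : Type where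
  f : Fib Q n
  g : Q

@[ext] lemma Ext.ext' {n : ℕ} {a b : Ext Q n} (h : ∀ x, a.f.1 x = b.f.1 x) (hg : a.g = b.g) :
    a = b := by
  cases a; cases b
  simp only at hg h
  congr 1
  exact Subtype.ext (funext h)

lemma finite_circle_roots (n : ℕ) (hn : 0 < n) : Finite {z : Circle // z ^ n = 1} := by
  have : Finite {z : ℂ // z ∈ Polynomial.nthRootsFinset n (1 : ℂ)} := inferInstance
  refine Finite.of_injective
    (fun z : {z : Circle // z ^ n = 1} =>
      (⟨(z.1 : ℂ), ?_⟩ : {z : ℂ // z ∈ Polynomial.nthRootsFinset n (1 : ℂ)})) ?_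
  · rw [Polynomial.mem_nthRootsFinset hn]
    have := z.2
    rw [← Circle.coe_pow, this, Circle.coe_one]
  · intro a b h
    simp only [Subtype.mk.injEq] at h
    exact Subtype.ext (Circle.ext h)

lemma finite_ext [Finite Q] (n : ℕ) (hn : 0 < n) : Finite (Ext Q n) := by
  have := finite_circle_roots n hn
  refine Finite.of_injective
    (fun a : Ext Q n => ((fun x => ⟨a.f.1 x, a.f.2.2 x⟩ : Q → {z : Circle // z ^ n = 1}), a.g)) ?_
  intro a b h
  simp only [Prod.mk.injEq] at h
  refine Ext.ext' (fun x => ?_) h.2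
  have := congrFun h.1 x
  simpa using this

lemma circle_root (n : ℕ) (hn : 0 < n) (z : Circle) :
    ∃ w : Circle, w ^ n = z ∧ (z = 1 → w = 1) := by
  by_cases hz : z = 1
  · exact ⟨1, by simp [hz], fun _ => rfl⟩
  · refine ⟨Circle.exp (Complex.arg z / n), ?_, fun h => absurd h hz⟩
    have hn' : (n : ℝ) ≠ 0 := by positivity
    rw [← Circle.exp_nsmul, nsmul_eq_mul, mul_div_cancel₀ _ hn', Circle.exp_arg]

section
variable (ω : Q → Q → Q → Circle) (n : ℕ)
  (hnorm : ∀ g h k, g = 1 ∨ h = 1 ∨ k = 1 → ω g h k = 1)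
  (hcoc : ∀ g₁ g₂ g₃ g₄, ω (g₁ * g₂) g₃ g₄ * ω g₁ g₂ (g₃ * g₄)
        = ω g₂ g₃ g₄ * ω g₁ (g₂ * g₃) g₄ * ω g₁ g₂ g₃)
  (htor : ∀ g h k, ω g h k ^ n = 1)

/-- Group structure on the extension. -/
noncomputable abbrev extGroup : Group (Ext Q n) :=
  letI : Mul (Ext Q n) := ⟨fun a b => ⟨⟨fun x => a.f.1 x * b.f.1 (x * a.g) * (b.f.1 a.g)⁻¹ *
    ω x a.g b.g, by
      refine ⟨by simp [a.f.2.1, hnorm], fun x => ?_⟩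
      simp [mul_pow, inv_pow, a.f.2.2, b.f.2.2, htor]⟩, a.g * b.g⟩⟩
  letI : One (Ext Q n) := ⟨⟨⟨fun _ => 1, by simp⟩, 1⟩⟩
  letI : Inv (Ext Q n) := ⟨fun a => ⟨⟨fun x => (a.f.1 (x * a.g⁻¹) * (a.f.1 a.g⁻¹)⁻¹ *
    ω x a.g⁻¹ a.g)⁻¹, by
      refine ⟨by simp [hnorm], fun x => ?_⟩
      simp [mul_pow, inv_pow, a.f.2.2, htor]⟩, a.g⁻¹⟩⟩
  Group.ofLeftAxioms
    (by
      intro a b c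
      refine Ext.ext' (fun x => ?_) (mul_assoc _ _ _)
      have := assoc_alg (a.f.1 x) (b.f.1 (x * a.g)) (b.f.1 a.g) (c.f.1 (x * a.g * b.g))
        (c.f.1 (a.g * b.g)) (c.f.1 b.g) _ _ _ _ _ (hcoc x a.g b.g c.g)
      simp only [mul_assoc] at this
      change a.f.1 x * b.f.1 (x * a.g) * (b.f.1 a.g)⁻¹ * ω x a.g b.g *
        c.f.1 (x * (a.g * b.g)) * (c.f.1 (a.g * b.g))⁻¹ * ω x (a.g * b.g) c.g =
        a.f.1 x * (b.f.1 (x * a.g) * c.f.1 (x * a.g * b.g) * (c.f.1 b.g)⁻¹ * ω (x * a.g) b.g c.g) *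
        (b.f.1 a.g * c.f.1 (a.g * b.g) * (c.f.1 b.g)⁻¹ * ω a.g b.g c.g)⁻¹ * ω x a.g (b.g * c.g)
      simp only [mul_assoc]
      exact this)
    (by
      intro a
      refine Ext.ext' (fun x => ?_) (one_mul _)
      change 1 * a.f.1 (x * 1) * (a.f.1 1)⁻¹ * ω x 1 a.g = a.f.1 x
      simp [a.f.2.1, hnorm])
    (by
      intro a
      refine Ext.ext' (fun x => ?_) (inv_mul_cancel _)
      change (a.f.1 (x * a.g⁻¹) * (a.f.1 a.g⁻¹)⁻¹ * ω x a.g⁻¹ a.g)⁻¹ * a.f.1 (x * a.g⁻¹) *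
        (a.f.1 a.g⁻¹)⁻¹ * ω x a.g⁻¹ a.g = 1
      simp only [mul_assoc]
      exact inv_mul_cancel _)

end

/-- Coboundary of a 2-cochain. -/
noncomputable def cob (b : Q → Q → Circle) (g h l : Q) : Circle :=
  (b h l)⁻¹ * b (g * h) l * (b g (h * l))⁻¹ * b g h

lemma cob_coc (b : Q → Q → Circle) (g₁ g₂ g₃ g₄ : Q) :
    cob b (g₁ * g₂) g₃ g₄ * cob b g₁ g₂ (g₃ * g₄)
        = cob b g₂ g₃ g₄ * cob b g₁ (g₂ * g₃) g₄ * cob b g₁ g₂ g₃ := by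
  simp only [cob, mul_assoc g₁ g₂, mul_assoc g₂ g₃]
  apply Additive.ofMul.injective
  simp only [ofMul_mul, ofMul_inv]
  abel

lemma cob_norm (b : Q → Q → Circle) (hb : ∀ g h, g = 1 ∨ h = 1 → b g h = 1) (g h k : Q)
    (H : g = 1 ∨ h = 1 ∨ k = 1) : cob b g h k = 1 := by
  rcases H with rfl | rfl | rfl <;> simp [cob, hb]

/-- Every cocycle is cohomologous to a torsion one. -/
lemma exists_torsion [Finite Q] (ω : Q → Q → Q → Circle)
    (hnorm : ∀ g h k, g = 1 ∨ h = 1 ∨ k = 1 → ω g h k = 1)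
    (hcoc : ∀ g₁ g₂ g₃ g₄, ω (g₁ * g₂) g₃ g₄ * ω g₁ g₂ (g₃ * g₄)
        = ω g₂ g₃ g₄ * ω g₁ (g₂ * g₃) g₄ * ω g₁ g₂ g₃) :
    ∃ (n : ℕ) (_ : 0 < n) (b : Q → Q → Circle), (∀ g h, g = 1 ∨ h = 1 → b g h = 1) ∧
      ∀ g h k, (ω g h k * cob b g h k) ^ n = 1 := by
  classical
  have := Fintype.ofFinite Q
  have hn : 0 < Fintype.card Q := Fintype.card_pos
  choose r hr hr1 using circle_root (Fintype.card Q) hn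
  let β : Q → Q → Circle := fun g h => ∏ x, ω x g h
  refine ⟨Fintype.card Q, hn, fun g h => r (β g h), ?_, ?_⟩
  · intro g h H
    apply hr1
    exact Finset.prod_eq_one fun x _ => hnorm _ _ _ (Or.inr H)
  · intro g h k
    have key : β h k * β g (h * k) = ω g h k ^ Fintype.card Q * β (g * h) k * β g h := by
      have h1 : ∏ x, (ω (x * g) h k * ω x g (h * k)) =
          ∏ x, (ω g h k * ω x (g * h) k * ω x g h) :=
        Finset.prod_congr rfl fun x _ => hcoc x g h k
      simp only [Finset.prod_mul_distrib, Finset.prod_const, Finset.card_univ] at h1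
      rw [← h1]
      congr 1
      exact (Equiv.prod_comp (Equiv.mulRight g) (fun x => ω x h k)).symm
    simp only [cob, mul_pow, inv_pow, hr]
    have h2 : ω g h k ^ Fintype.card Q =
        β h k * β g (h * k) * (β g h)⁻¹ * (β (g * h) k)⁻¹ := by rw [key]; group
    rw [h2]
    apply Additive.ofMul.injective
    simp only [ofMul_mul, ofMul_inv, ofMul_one]
    abel

end CohLem

/-- Lemma 4.3 of the paper.  For every finite group `Q` and normalized
`U(1)`-valued 3-cocycle `ω₀` on `Q` there are a finite group `G`, a surjection `ρ : G → Q`, a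
normalized 3-cocycle `ω` cohomologous to `ω₀` and a normalized 2-cochain `c` on `G` with
`dc = ρ*(ω)` and `c ≡ 1` on `ker ρ`. -/
theorem cohomology_lemma (Q : Type) [Group Q] [Finite Q]
    (ω₀ : Q → Q → Q → Circle)
    (hω₀_norm : ∀ g h k, g = 1 ∨ h = 1 ∨ k = 1 → ω₀ g h k = 1)
    (hω₀_coc : ∀ g₁ g₂ g₃ g₄,
      ω₀ (g₁ * g₂) g₃ g₄ * ω₀ g₁ g₂ (g₃ * g₄)
        = ω₀ g₂ g₃ g₄ * ω₀ g₁ (g₂ * g₃) g₄ * ω₀ g₁ g₂ g₃) :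
    Nonempty (CohomologyLemmaWitness Q ω₀) := by
  classical
  obtain ⟨n, hn, b, hb, htor⟩ := CohLem.exists_torsion ω₀ hω₀_norm hω₀_coc
  let ω : Q → Q → Q → Circle := fun g h k => ω₀ g h k * CohLem.cob b g h k
  have hnorm : ∀ g h k, g = 1 ∨ h = 1 ∨ k = 1 → ω g h k = 1 := by
    intro g h k H
    simp only [ω, hω₀_norm g h k H, CohLem.cob_norm b hb g h k H, mul_one]
  have hcoc : ∀ g₁ g₂ g₃ g₄, ω (g₁ * g₂) g₃ g₄ * ω g₁ g₂ (g₃ * g₄)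
        = ω g₂ g₃ g₄ * ω g₁ (g₂ * g₃) g₄ * ω g₁ g₂ g₃ := by
    intro g₁ g₂ g₃ g₄
    simp only [ω]
    rw [mul_mul_mul_comm, hω₀_coc, CohLem.cob_coc, mul_mul_mul_comm, mul_mul_mul_comm (ω₀ g₂ g₃ g₄)]
  letI : Group (CohLem.Ext Q n) := CohLem.extGroup ω n hnorm hcoc htor
  haveI : Finite (CohLem.Ext Q n) := CohLem.finite_ext n hn
  refine ⟨{
    G := CohLem.Ext Q n
    ρ := MonoidHom.mk' (fun a => a.g) (fun _ _ => rfl)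
    surj := fun q => ⟨⟨⟨fun _ => 1, by simp⟩, q⟩, rfl⟩
    ω := ω
    ω_norm := hnorm
    ω_coc := hcoc
    b := b
    b_norm := hb
    cohomologous := ?_
    c := fun a b => (b.f.1 a.g)⁻¹
    c_norm := ?_
    c_coboundary := ?_
    c_ker := ?_ }⟩
  · intro g h l
    simp only [ω]
    rw [mul_comm (ω₀ g h l), mul_inv_cancel_right]
    rfl
  · rintro x y (rfl | rfl)
    · change (y.f.1 1)⁻¹ = 1
      rw [y.f.2.1, inv_one]
    · change (1 : Circle)⁻¹ = 1
      exact inv_one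
  · intro x y z
    change ((z.f.1 y.g)⁻¹)⁻¹ * (z.f.1 (x.g * y.g))⁻¹ *
      ((y.f.1 x.g * z.f.1 (x.g * y.g) * (z.f.1 y.g)⁻¹ * ω x.g y.g z.g)⁻¹)⁻¹ * (y.f.1 x.g)⁻¹
      = ω x.g y.g z.g
    apply Additive.ofMul.injective
    simp only [ofMul_mul, ofMul_inv]
    abel
  · intro x y hx _
    have hx' : x.g = 1 := hx
    change (y.f.1 x.g)⁻¹ = 1
    rw [hx', y.f.2.1, inv_one]
end

section
/- Let m, n be positive integers and a, b, c integers. For i ∈ (ℤ/mℤ) × (ℤ/nℤ) write i₁ ∈ {0,…,m−1} and i₂ ∈ {0,…,n−1} for the canonical integer representatives of its two components. Define ω(i,j,k) := exp(2πi·(a·i₁·⌊(j₁+k₁)/m⌋)/m) · exp(2πi·(b·i₂·⌊(j₁+k₁)/m⌋ + c·i₂·⌊(j₂+k₂)/n⌋)/n) ∈ U(1), and for z, w ∈ U(1) define μ(i,j)(z,w) := (exp(2πi/m)·z)^{a·⌊(i₁+j₁)/m⌋} · (exp(2πi/n)·w)^{b·⌊(i₁+j₁)/m⌋ + c·⌊(i₂+j₂)/n⌋}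 ∈ U(1), where the sums i₁+j₁ and i₂+j₂ are taken in ℤ (not reduced modulo m or n) and the exponents are integer powers. Then for all i, j, k ∈ (ℤ/mℤ) × (ℤ/nℤ) and all z, w ∈ U(1): ω(i,j,k) · μ(i+j,k)(z,w) · μ(i,j)(z,w) = μ(i,j+k)(z,w) · μ(j,k)( exp(2πi·i₁/m)·z , exp(2πi·i₂/n)·w ). -/
open scoped Real

/-- The carry cocycle identity: both sides equal the floor of the full sum over `m`. -/
theorem carry_cocycle (m : ℕ) (hm : 0 < m) (x y z : ZMod m) :
    (((x + y).val : ℤ) + (z.val : ℤ)).fdiv m + ((x.val : ℤ) + (y.val : ℤ)).fdiv m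
      = ((x.val : ℤ) + ((y + z).val : ℤ)).fdiv m + ((y.val : ℤ) + (z.val : ℤ)).fdiv m := by
  have : NeZero m := ⟨hm.ne'⟩
  have hm' : (m : ℤ) ≠ 0 := by exact_mod_cast hm.ne'
  have h0 : (0 : ℤ) ≤ m := by positivity
  simp only [Int.fdiv_eq_ediv_of_nonneg _ h0, ZMod.val_add]
  push_cast
  rw [← Int.add_mul_ediv_right _ _ hm', ← Int.add_mul_ediv_right _ _ hm']
  congr 1
  have h1 := Int.emod_add_mul_ediv ((x.val : ℤ) + y.val) m
  have h2 := Int.emod_add_mul_ediv ((y.val : ℤ) + z.val) m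
  linarith

theorem circle_exp_int (t : ℝ) (k : ℤ) : Circle.exp (k * t) = Circle.exp t ^ k := by
  exact Circle.exp_intCast_mul t k

/-- Proposition 4.5 of the paper.  The explicit functions `μ` trivialize the
pullback of the explicit 3-cocycle `ω = ω_{a,b,c}` on `(ℤ/mℤ) × (ℤ/nℤ)` over the rotation
action on the 2-torus.  Here `i₁, i₂` denote the canonical integer representatives of the two
components (sums of representatives being taken in `ℤ`, not reduced), and `Int.fdiv` is floor
division, so `Int.fdiv x m = ⌊x/m⌋`. -/
theorem torus_trivialization
    (m n : ℕ) (hm : 0 < m) (hn : 0 < n) (a b c : ℤ)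
    (ω : ZMod m × ZMod n → ZMod m × ZMod n → ZMod m × ZMod n → Circle)
    (hω : ∀ i j k : ZMod m × ZMod n,
      ω i j k =
        Circle.exp (2 * π *
            ((a * (i.1.val : ℤ) * (((j.1.val : ℤ) + (k.1.val : ℤ)).fdiv m) : ℤ) : ℝ) / m) *
        Circle.exp (2 * π *
            ((b * (i.2.val : ℤ) * (((j.1.val : ℤ) + (k.1.val : ℤ)).fdiv m)
              + c * (i.2.val : ℤ) * (((j.2.val : ℤ) + (k.2.val : ℤ)).fdiv n) : ℤ) : ℝ) / n))
    (μ : ZMod m × ZMod n → ZMod m × ZMod n → Circle → Circle → Circle)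
    (hμ : ∀ (i j : ZMod m × ZMod n) (z w : Circle),
      μ i j z w =
        (Circle.exp (2 * π / m) * z) ^ (a * (((i.1.val : ℤ) + (j.1.val : ℤ)).fdiv m)) *
        (Circle.exp (2 * π / n) * w) ^
          (b * (((i.1.val : ℤ) + (j.1.val : ℤ)).fdiv m)
            + c * (((i.2.val : ℤ) + (j.2.val : ℤ)).fdiv n))) :
    ∀ (i j k : ZMod m × ZMod n) (z w : Circle),
      ω i j k * μ (i + j) k z w * μ i j z w
        = μ i (j + k) z w *
          μ j k (Circle.exp (2 * π * (i.1.val : ℝ) / m) * z)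
                (Circle.exp (2 * π * (i.2.val : ℝ) / n) * w) := by
  intro i j k z w
  have h1 := carry_cocycle m hm i.1 j.1 k.1
  have h2 := carry_cocycle n hn i.2 j.2 k.2
  rw [hω, hμ, hμ, hμ, hμ]
  simp only [Prod.fst_add, Prod.snd_add]
  generalize (((i.1 + j.1).val : ℤ) + (k.1.val : ℤ)).fdiv m = A1 at *
  generalize ((i.1.val : ℤ) + (j.1.val : ℤ)).fdiv m = A2 at *
  generalize ((i.1.val : ℤ) + ((j.1 + k.1).val : ℤ)).fdiv m = A3 at *
  generalize ((j.1.val : ℤ) + (k.1.val : ℤ)).fdiv m = A4 at *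
  generalize (((i.2 + j.2).val : ℤ) + (k.2.val : ℤ)).fdiv n = B1 at *
  generalize ((i.2.val : ℤ) + (j.2.val : ℤ)).fdiv n = B2 at *
  generalize ((i.2.val : ℤ) + ((j.2 + k.2).val : ℤ)).fdiv n = B3 at *
  generalize ((j.2.val : ℤ) + (k.2.val : ℤ)).fdiv n = B4 at *
  have e1 : Circle.exp (2 * π * ((a * (i.1.val : ℤ) * A4 : ℤ) : ℝ) / m)
      = Circle.exp (2 * π * (i.1.val : ℝ) / m) ^ (a * A4) := by
    rw [← circle_exp_int]
    congr 1
    push_cast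
    ring
  have e2 : Circle.exp (2 * π * ((b * (i.2.val : ℤ) * A4 + c * (i.2.val : ℤ) * B4 : ℤ) : ℝ) / n)
      = Circle.exp (2 * π * (i.2.val : ℝ) / n) ^ (b * A4 + c * B4) := by
    rw [← circle_exp_int]
    congr 1
    push_cast
    ring
  rw [e1, e2]
  generalize Circle.exp (2 * π * (i.1.val : ℝ) / m) = X
  generalize Circle.exp (2 * π * (i.2.val : ℝ) / n) = Y
  rw [mul_left_comm _ X z, mul_left_comm _ Y w]
  generalize Circle.exp (2 * π / m) * z = P
  generalize Circle.exp (2 * π / n) * w = Q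
  rw [mul_zpow X P, mul_zpow Y Q]
  have p1 : P ^ (a * A1) * P ^ (a * A2) = P ^ (a * A3) * P ^ (a * A4) := by
    rw [← zpow_add, ← zpow_add, ← mul_add, ← mul_add, h1]
  have q1 : Q ^ (b * A1 + c * B1) * Q ^ (b * A2 + c * B2)
      = Q ^ (b * A3 + c * B3) * Q ^ (b * A4 + c * B4) := by
    rw [← zpow_add, ← zpow_add]
    congr 1
    linear_combination b * h1 + c * h2
  generalize P ^ (a * A1) = P1 at *
  generalize P ^ (a * A2) = P2 at *
  generalize P ^ (a * A3) = P3 at *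
  generalize P ^ (a * A4) = P4 at *
  generalize Q ^ (b * A1 + c * B1) = Q1 at *
  generalize Q ^ (b * A2 + c * B2) = Q2 at *
  generalize Q ^ (b * A3 + c * B3) = Q3 at *
  generalize Q ^ (b * A4 + c * B4) = Q4 at *
  generalize X ^ (a * A4) = X4 at *
  generalize Y ^ (b * A4 + c * B4) = Y4 at *
  calc X4 * Y4 * (P1 * Q1) * (P2 * Q2) = X4 * Y4 * ((P1 * P2) * (Q1 * Q2)) := by
        simp only [mul_assoc, mul_left_comm Q1 P2]
    _ = X4 * Y4 * ((P3 * P4) * (Q3 * Q4)) := by rw [p1, q1]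
    _ = P3 * Q3 * (X4 * P4 * (Y4 * Q4)) := by
        simp only [mul_assoc, mul_comm, mul_left_comm]
end

section
/- Let m, n be positive integers and a, b, c integers. For i ∈ (ℤ/mℤ) × (ℤ/nℤ) write i₁ ∈ {0,…,m−1} and i₂ ∈ {0,…,n−1} for the canonical integer representatives of its two components, and define ω(i,j,k) := exp(2πi·(a·i₁·⌊(j₁+k₁)/m⌋)/m) · exp(2πi·(b·i₂·⌊(j₁+k₁)/m⌋ + c·i₂·⌊(j₂+k₂)/n⌋)/n) ∈ U(1), where the sums j₁+k₁ and j₂+k₂ are taken in ℤ (not reduced). Then ω is a normalized U(1)-valued 3-cocycle on the group (ℤ/mℤ) × (ℤ/nℤ): ω(i,j,k) = 1 whenever i, j, or k is zero, and ω(i·j,k,l)·ω(i,j,k·l) = ω(j,k,l)·ω(i,j·k,l)·ω(i,j,k) for all i,j,k,l, where · is addition in (ℤ/mℤ) × (ℤ/nℤ). -/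
open scoped Real

theorem circle_exp_shift (n : ℕ) (hn : 0 < n) (x y z : ℤ) (h : x = y + n * z) :
    Circle.exp (2 * π * (x : ℝ) / n) = Circle.exp (2 * π * (y : ℝ) / n) := by
  have hn' : (n : ℝ) ≠ 0 := by positivity
  rw [Circle.exp_eq_exp]
  refine ⟨z, ?_⟩
  subst h
  push_cast
  field_simp

theorem zmod_val_add_carry (m : ℕ) (hm : 0 < m) (x y : ZMod m) :
    ((x + y).val : ℤ) = x.val + y.val - m * ((x.val : ℤ) + (y.val : ℤ)).fdiv m := by
  have : NeZero m := ⟨hm.ne'⟩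
  rw [ZMod.val_add, Int.fdiv_eq_ediv_of_nonneg _ (by positivity)]
  push_cast
  rw [Int.emod_def]

theorem zmod_carry_cocycle (m : ℕ) (hm : 0 < m) (x y z : ZMod m) :
    ((x.val : ℤ) + ((y + z).val : ℤ)).fdiv m + ((y.val : ℤ) + (z.val : ℤ)).fdiv m
      = (((x + y).val : ℤ) + (z.val : ℤ)).fdiv m + ((x.val : ℤ) + (y.val : ℤ)).fdiv m := by
  have h1 := zmod_val_add_carry m hm x (y + z)
  have h2 := zmod_val_add_carry m hm y z
  have h3 := zmod_val_add_carry m hm (x + y) z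
  have h4 := zmod_val_add_carry m hm x y
  rw [← add_assoc] at h1
  have hm' : (m : ℤ) ≠ 0 := by positivity
  apply mul_left_cancel₀ hm'
  linarith

theorem zmod_carry_zero_left (m : ℕ) (hm : 0 < m) (x : ZMod m) :
    (((0 : ZMod m).val : ℤ) + (x.val : ℤ)).fdiv m = 0 := by
  have h1 := zmod_val_add_carry m hm 0 x
  have hm' : (m : ℤ) ≠ 0 := by positivity
  apply mul_left_cancel₀ hm'
  rw [zero_add] at h1
  have : ((0 : ZMod m).val : ℤ) = 0 := by simp
  linarith

theorem zmod_carry_zero_right (m : ℕ) (hm : 0 < m) (x : ZMod m) :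
    ((x.val : ℤ) + ((0 : ZMod m).val : ℤ)).fdiv m = 0 := by
  rw [add_comm, zmod_carry_zero_left m hm]

/-- The explicit formula `ω_{a,b,c}` defines a normalized `U(1)`-valued
3-cocycle on `(ℤ/mℤ) × (ℤ/nℤ)`.  Here `i₁, i₂` denote the canonical integer representatives of
the two components (sums of representatives being taken in `ℤ`, not reduced) and `Int.fdiv` is
floor division, so `Int.fdiv x m = ⌊x/m⌋`. -/
theorem omega_abc_is_normalized_three_cocycle
    (m n : ℕ) (hm : 0 < m) (hn : 0 < n) (a b c : ℤ)
    (ω : ZMod m × ZMod n → ZMod m × ZMod n → ZMod m × ZMod n → Circle)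
    (hω : ∀ i j k : ZMod m × ZMod n,
      ω i j k =
        Circle.exp (2 * π *
            ((a * (i.1.val : ℤ) * (((j.1.val : ℤ) + (k.1.val : ℤ)).fdiv m) : ℤ) : ℝ) / m) *
        Circle.exp (2 * π *
            ((b * (i.2.val : ℤ) * (((j.1.val : ℤ) + (k.1.val : ℤ)).fdiv m)
              + c * (i.2.val : ℤ) * (((j.2.val : ℤ) + (k.2.val : ℤ)).fdiv n) : ℤ) : ℝ) / n)) :
    (∀ i j k : ZMod m × ZMod n, i = 0 ∨ j = 0 ∨ k = 0 → ω i j k = 1) ∧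
    (∀ i j k l : ZMod m × ZMod n,
      ω (i + j) k l * ω i j (k + l) = ω j k l * ω i (j + k) l * ω i j k) := by
  constructor
  · rintro i j k (rfl | rfl | rfl)
    · rw [hω]; simp
    · rw [hω, Prod.fst_zero, Prod.snd_zero, zmod_carry_zero_left m hm, zmod_carry_zero_left n hn]
      simp
    · rw [hω, Prod.fst_zero, Prod.snd_zero, zmod_carry_zero_right m hm,
        zmod_carry_zero_right n hn]
      simp
  · intro i j k l
    have E : ∀ (N : ℕ) (x y : ℤ), Circle.exp (2 * π * (x : ℝ) / N) *
        Circle.exp (2 * π * (y : ℝ) / N) = Circle.exp (2 * π * ((x + y : ℤ) : ℝ) / N) := by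
      intro N x y
      rw [← Circle.exp_add]
      congr 1
      push_cast
      ring
    simp only [hω, Prod.fst_add, Prod.snd_add]
    rw [mul_mul_mul_comm, E, E]
    have R : ∀ p q r s t u : Circle, p * q * (r * s) * (t * u) = (p * r * t) * (q * s * u) := by
      intro p q r s t u
      rw [mul_mul_mul_comm p, mul_mul_mul_comm (p * r)]
    rw [R, E, E, E, E]
    have c1 := zmod_carry_cocycle m hm j.1 k.1 l.1
    have c2 := zmod_carry_cocycle n hn j.2 k.2 l.2
    have v1 := zmod_val_add_carry m hm i.1 j.1
    have v2 := zmod_val_add_carry n hn i.2 j.2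
    rw [v1, v2, eq_sub_of_add_eq c1, eq_sub_of_add_eq c2]
    congr 1
    · apply circle_exp_shift m hm _ _ (-(a * ((i.1.val : ℤ) + (j.1.val : ℤ)).fdiv m *
        ((k.1.val : ℤ) + (l.1.val : ℤ)).fdiv m))
      ring
    · apply circle_exp_shift n hn _ _ (-(((i.2.val : ℤ) + (j.2.val : ℤ)).fdiv n *
        (b * ((k.1.val : ℤ) + (l.1.val : ℤ)).fdiv m + c * ((k.2.val : ℤ) + (l.2.val : ℤ)).fdiv n)))
      ring
end

section
/- For every positive integer m and every normalized U(1)-valued 3-cocycle ω on ℤ/mℤ, there exists an ω-anomalous action of ℤ/mℤ on C(S¹): that is, there exist an action of ℤ/mℤ on the circle S¹ = U(1) by homeomorphisms g ↦ φ_g, and continuous functions μ(g,h) : S¹ → U(1) for g,h ∈ ℤ/mℤ with μ(g,h) constantly 1 whenever g or h is zero, such that ω(g,h,k)·μ(g+h,k)(z)·μ(g,h)(z) = μ(g,h+k)(z)·μ(h,k)(φ_g⁻¹(z)) for all g,h,k ∈ ℤ/mℤ and all z ∈ S¹. -/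
namespace AnomAux

variable {m : ℕ}

lemma add_aux {A : Type*} [AddCommGroup A] (w1ghk wghk w1ghk' w1gh w1gh' μ1 μ2 μ3 μ4 c1 c2 c3 : A)
    (hc : w1ghk + w1gh' = wghk + w1ghk' + w1gh)
    (hE : wghk + μ1 + μ2 = μ3 + μ4) :
    w1ghk + (μ1 + c1 - c2 - w1ghk') + (μ2 + c2 - c3 - w1gh) = (μ3 + c1 - c3 - w1gh') + μ4 := by
  have h1 : w1ghk = wghk + w1ghk' + w1gh - w1gh' := by rw [← hc]; abel
  have h2 : wghk = μ3 + μ4 - μ1 - μ2 := by rw [← hE]; abel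
  rw [h1, h2]; abel

lemma mul_aux {A : Type*} [CommGroup A] (w1ghk wghk w1ghk' w1gh w1gh' μ1 μ2 μ3 μ4 c1 c2 c3 : A)
    (hc : w1ghk * w1gh' = wghk * w1ghk' * w1gh)
    (hE : wghk * μ1 * μ2 = μ3 * μ4) :
    w1ghk * (μ1 * c1 / c2 / w1ghk') * (μ2 * c2 / c3 / w1gh) = (μ3 * c1 / c3 / w1gh') * μ4 :=
  add_aux (A := Additive A) w1ghk wghk w1ghk' w1gh w1gh' μ1 μ2 μ3 μ4 c1 c2 c3 hc hE

/-- the one-variable cochain -/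
noncomputable def c (p : ℕ) (j : ZMod m) (z : Circle) : Circle := if j = -1 then z ^ p else 1

/-- the two-cochain, with natural first argument -/
noncomputable def mu [NeZero m] (ω : ZMod m → ZMod m → ZMod m → Circle) (p : ℕ) (n : ℕ) (k : ZMod m)
    (z : Circle) : Circle :=
  ∏ j ∈ Finset.range n, (c p ((j : ZMod m) + k) (ZMod.toCircle ((j : ZMod m) + 1 - (n : ZMod m)) * z) /
    c p (j : ZMod m) (ZMod.toCircle ((j : ZMod m) + 1 - (n : ZMod m)) * z) / ω 1 j k)

lemma continuous_c (p : ℕ) (j : ZMod m) : Continuous (c p j) := by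
  unfold c
  split_ifs <;> fun_prop

lemma continuous_mu [NeZero m] (ω : ZMod m → ZMod m → ZMod m → Circle) (p n : ℕ) (k : ZMod m) :
    Continuous (mu ω p n k) := by
  unfold mu
  refine continuous_finsetProd _ fun j _ => ?_
  refine Continuous.div' (Continuous.div' ?_ ?_) continuous_const
  · exact (continuous_c p _).comp (by fun_prop)
  · exact (continuous_c p _).comp (by fun_prop)

lemma mu_succ [NeZero m] (ω : ZMod m → ZMod m → ZMod m → Circle) (p n : ℕ) (k : ZMod m)
    (z : Circle) :
    mu ω p (n + 1) k z = mu ω p n k (ZMod.toCircle (-1 : ZMod m) * z) *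
      c p ((n : ZMod m) + k) z / c p (n : ZMod m) z / ω 1 n k := by
  unfold mu
  rw [Finset.prod_range_succ]
  have h0 : (n : ZMod m) + 1 - ((n + 1 : ℕ) : ZMod m) = 0 := by push_cast; ring
  rw [h0, AddChar.map_zero_eq_one, one_mul]
  have : ∀ j : ℕ, ZMod.toCircle ((j : ZMod m) + 1 - ((n + 1 : ℕ) : ZMod m)) * z =
      ZMod.toCircle ((j : ZMod m) + 1 - (n : ZMod m)) * (ZMod.toCircle (-1 : ZMod m) * z) := by
    intro j
    rw [← mul_assoc, ← AddChar.map_add_eq_mul]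
    congr 2; push_cast; ring
  simp only [this, mul_div_assoc]

lemma prod_range_zmod [NeZero m] (f : ZMod m → Circle) :
    ∏ j ∈ Finset.range m, f (j : ZMod m) = ∏ j : ZMod m, f j := by
  refine Finset.prod_bij' (fun j _ => (j : ZMod m)) (fun x _ => x.val) ?_ ?_ ?_ ?_ ?_
  · simp
  · intro x _; simpa using ZMod.val_lt x
  · intro j hj; exact ZMod.val_cast_of_lt (by simpa using hj)
  · intro x _; simp
  · simp

lemma mu_m [NeZero m] (ω : ZMod m → ZMod m → ZMod m → Circle) (p : ℕ) (k : ZMod m)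
    (hp : ∏ j : ZMod m, ω 1 j k = ZMod.toCircle (-k) ^ p) (z : Circle) :
    mu ω p m k z = 1 := by
  unfold mu
  rw [prod_range_zmod (fun j : ZMod m => c p (j + k) (ZMod.toCircle (j + 1 - (m : ZMod m)) * z) /
    c p j (ZMod.toCircle (j + 1 - (m : ZMod m)) * z) / ω 1 j k)]
  rw [Finset.prod_div_distrib, Finset.prod_div_distrib, hp]
  unfold c
  have : ∀ j : ZMod m, (j + k = -1) ↔ (j = -1 - k) := fun j => by
    rw [eq_sub_iff_add_eq]
  simp only [this, Finset.prod_ite_eq', Finset.mem_univ, if_true]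
  have e1 : (-1 - k + 1 - (m : ZMod m)) = -k := by rw [ZMod.natCast_self]; ring
  have e2 : (-1 + 1 - (m : ZMod m)) = 0 := by simp
  rw [e1, e2, AddChar.map_zero_eq_one, one_mul, mul_pow]
  simp

lemma exists_p [NeZero m] (ω : ZMod m → ZMod m → ZMod m → Circle)
    (hω_norm : ∀ g h k, g = 0 ∨ h = 0 ∨ k = 0 → ω g h k = 1)
    (hω_coc : ∀ g₁ g₂ g₃ g₄,
      ω (g₁ + g₂) g₃ g₄ * ω g₁ g₂ (g₃ + g₄)
        = ω g₂ g₃ g₄ * ω g₁ (g₂ + g₃) g₄ * ω g₁ g₂ g₃) :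
    ∃ p : ℕ, ∀ k, ∏ j : ZMod m, ω 1 j k = ZMod.toCircle (-k) ^ p := by
  let P : AddChar (ZMod m) Circle :=
    { toFun := fun k => ∏ j : ZMod m, ω 1 j k
      map_zero_eq_one' := Finset.prod_eq_one fun j _ => hω_norm _ _ _ (by simp)
      map_add_eq_mul' := by
        intro k l
        have h := Finset.prod_congr (rfl : (Finset.univ : Finset (ZMod m)) = Finset.univ)
          (fun j _ => hω_coc 1 j k l)
        simp only [Finset.prod_mul_distrib] at h
        rw [Fintype.prod_equiv (Equiv.addLeft (1 : ZMod m)) (fun j => ω (1 + j) k l)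
          (fun j => ω j k l) (fun _ => rfl),
          Fintype.prod_equiv (Equiv.addRight k) (fun j => ω 1 (j + k) l)
          (fun j => ω 1 j l) (fun _ => rfl), mul_assoc] at h
        rw [mul_left_cancel h, mul_comm] }
  obtain ⟨x, hx⟩ := (AddChar.zmodAddEquiv (n := m)).surjective (AddChar.circleEquivComplex P)
  rw [AddChar.zmodAddEquiv_apply] at hx
  replace hx := AddChar.circleEquivComplex.injective hx
  refine ⟨(-x).val, fun k => ?_⟩
  change P k = _
  rw [← hx, ← AddChar.map_nsmul_eq_pow]
  have : (-x).val • (-k) = x * k := by simp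
  rw [this]
  rfl

end AnomAux

/-- Sections 3.1 and 4.3 of the paper.  For every positive integer `m` and
every normalized `U(1)`-valued 3-cocycle `ω` on `ℤ/mℤ`, there is an `ω`-anomalous action of
`ℤ/mℤ` on `C(S¹)`: an action of `ℤ/mℤ` on the circle by homeomorphisms `g ↦ φ g` together with
normalized continuous functions `μ g h : S¹ → U(1)` satisfying the anomalous cocycle
equation. -/
theorem anomalous_action_of_cyclic_on_circle
    (m : ℕ) (hm : 0 < m)
    (ω : ZMod m → ZMod m → ZMod m → Circle)
    (hω_norm : ∀ g h k, g = 0 ∨ h = 0 ∨ k = 0 → ω g h k = 1)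
    (hω_coc : ∀ g₁ g₂ g₃ g₄,
      ω (g₁ + g₂) g₃ g₄ * ω g₁ g₂ (g₃ + g₄)
        = ω g₂ g₃ g₄ * ω g₁ (g₂ + g₃) g₄ * ω g₁ g₂ g₃) :
    ∃ (φ : ZMod m → (Circle ≃ₜ Circle)) (μ : ZMod m → ZMod m → C(Circle, Circle)),
      φ 0 = Homeomorph.refl Circle ∧
      (∀ g h z, φ (g + h) z = φ g (φ h z)) ∧
      (∀ g h, g = 0 ∨ h = 0 → μ g h = 1) ∧
      (∀ g h k z,
        ω g h k * μ (g + h) k z * μ g h z = μ g (h + k) z * μ h k ((φ g).symm z)) := by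
  have : NeZero m := ⟨hm.ne'⟩
  obtain ⟨p, hp⟩ := AnomAux.exists_p ω hω_norm hω_coc
  have R : ∀ (g k : ZMod m) (z : Circle), AnomAux.mu ω p (1 + g).val k z =
      AnomAux.mu ω p g.val k (ZMod.toCircle (-1 : ZMod m) * z) *
      AnomAux.c p (g + k) z / AnomAux.c p g z / ω 1 g k := by
    intro g k z
    have h := AnomAux.mu_succ ω p g.val k z
    simp only [ZMod.natCast_val, ZMod.cast_id', id] at h
    rw [← h]
    have hlt := ZMod.val_lt g
    have hg : (1 + g) = ((g.val + 1 : ℕ) : ZMod m) := by simp [add_comm]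
    rcases Nat.lt_or_ge (g.val + 1) m with h1 | h1
    · rw [hg, ZMod.val_cast_of_lt h1]
    · have h2 : g.val + 1 = m := by omega
      rw [hg, h2, AnomAux.mu_m ω p k (hp k)]
      simp [AnomAux.mu]
  refine ⟨fun g => Homeomorph.mulLeft (ZMod.toCircle g),
    fun g h => ⟨AnomAux.mu ω p g.val h, AnomAux.continuous_mu ω p _ h⟩, ?_, ?_, ?_, ?_⟩
  · ext z; simp
  · intro g h z
    simp [AddChar.map_add_eq_mul, mul_assoc]
  · rintro g h (rfl | rfl)
    · ext z; simp [AnomAux.mu]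
    · ext z
      simp [AnomAux.mu, hω_norm]
  · have key : ∀ (n : ℕ) (h k : ZMod m) (z : Circle),
        ω n h k * AnomAux.mu ω p ((n : ZMod m) + h).val k z * AnomAux.mu ω p (n : ZMod m).val h z =
        AnomAux.mu ω p (n : ZMod m).val (h + k) z *
          AnomAux.mu ω p h.val k (ZMod.toCircle (-(n : ZMod m)) * z) := by
      intro n
      induction n with
      | zero => intro h k z; simp [AnomAux.mu, hω_norm]
      | succ n ih =>
        intro h k z
        have e : ((n + 1 : ℕ) : ZMod m) = 1 + (n : ZMod m) := by push_cast; ring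
        rw [e, add_assoc, R, R, R, ← add_assoc]
        have e2 : ZMod.toCircle (-(1 + (n : ZMod m))) * z =
            ZMod.toCircle (-(n : ZMod m)) * (ZMod.toCircle (-1 : ZMod m) * z) := by
          rw [← mul_assoc, ← AddChar.map_add_eq_mul]
          congr 2; ring
        rw [e2]
        exact AnomAux.mul_aux _ _ _ _ _ _ _ _ _ _ _ _ (hω_coc 1 n h k)
          (ih h k (ZMod.toCircle (-1 : ZMod m) * z))
    intro g h k z
    have := key g.val h k z
    simp only [ZMod.natCast_val, ZMod.cast_id', id] at this
    rw [AddChar.map_neg_eq_inv] at this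
    exact this
end

section
/- Let m, n be positive integers and a, b, c integers, and let ω_{a,b,c} be the normalized 3-cocycle on (ℤ/mℤ) × (ℤ/nℤ) given by ω_{a,b,c}(i,j,k) := exp(2πi·(a·i₁·⌊(j₁+k₁)/m⌋)/m)·exp(2πi·(b·i₂·⌊(j₁+k₁)/m⌋ + c·i₂·⌊(j₂+k₂)/n⌋)/n), where i₁ ∈ {0,…,m−1}, i₂ ∈ {0,…,n−1} are the canonical representatives of the components of i and sums of representatives are taken in ℤ. Then there exists an ω_{a,b,c}-anomalous action of (ℤ/mℤ) × (ℤ/nℤ) on C(𝕋²), where 𝕋² = U(1) × U(1): that is, an action of (ℤ/mℤ) × (ℤ/nℤ) on 𝕋² by homeomorphisms g ↦ φ_g and continuous functions μ(g,h) : 𝕋² → U(1), with μ(g,h) constantly 1 whenever g or h is zero, satisfying ω_{a,b,c}(g,h,k)·μ(g+h,k)(z,w)·μ(g,h)(z,w) = μ(g,h+k)(z,w)·μ(h,k)(φ_g⁻¹(z,w)) for all g,h,k and (z,w) ∈ 𝕋². -/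
open scoped Real

/-- The carry of the addition of canonical representatives. -/
def carryZ (m : ℕ) (x y : ZMod m) : ℤ := ((x.val : ℤ) + (y.val : ℤ)).fdiv m

theorem carryZ_spec (m : ℕ) [NeZero m] (x y : ZMod m) :
    (m : ℤ) * carryZ m x y = x.val + y.val - (x + y).val := by
  unfold carryZ
  rw [Int.fdiv_eq_ediv_of_nonneg _ (by positivity), ZMod.val_add]
  push_cast
  have := Int.mul_ediv_add_emod ((x.val : ℤ) + y.val) m
  linarith

theorem carryZ_cocycle (m : ℕ) [NeZero m] (x y z : ZMod m) :
    carryZ m (x + y) z + carryZ m x y = carryZ m x (y + z) + carryZ m y z := by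
  have hm : (m : ℤ) ≠ 0 := by exact_mod_cast NeZero.ne m
  apply mul_left_cancel₀ hm
  rw [mul_add, mul_add]
  simp only [carryZ_spec, add_assoc]
  ring

theorem carryZ_zero (m : ℕ) [NeZero m] (x y : ZMod m) (h : x = 0 ∨ y = 0) :
    carryZ m x y = 0 := by
  have hm : (m : ℤ) ≠ 0 := by exact_mod_cast NeZero.ne m
  apply mul_left_cancel₀ hm
  rw [carryZ_spec]
  rcases h with h | h <;> simp [h]

theorem toCircle_zpow_eq (m : ℕ) [NeZero m] (x : ZMod m) (s : ℤ) :
    (ZMod.toCircle x) ^ s = Circle.exp (2 * π * ((s * (x.val : ℤ) : ℤ) : ℝ) / m) := by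
  have h : ZMod.toCircle x = Circle.exp (2 * π * (x.val : ℝ) / m) := by
    apply Subtype.ext
    rw [ZMod.toCircle_apply, Circle.coe_exp]
    congr 1
    push_cast
    ring
  rw [h, ← Circle.exp_zsmul]
  congr 1
  push_cast
  simp only [zsmul_eq_mul]
  ring

/-- Section 4.4 of the paper.  Every explicit anomaly `ω_{a,b,c}` of
`(ℤ/mℤ) × (ℤ/nℤ)` is realized on the 2-torus `𝕋² = U(1) × U(1)`: there are an action of
`(ℤ/mℤ) × (ℤ/nℤ)` on `𝕋²` by homeomorphisms `g ↦ φ g` and normalized continuous functions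
`μ g h : 𝕋² → U(1)` satisfying the anomalous cocycle equation for `ω_{a,b,c}`.  Here `i₁, i₂`
denote the canonical integer representatives of the two components (sums taken in `ℤ`, not
reduced) and `Int.fdiv` is floor division, so `Int.fdiv x m = ⌊x/m⌋`. -/
theorem anomalous_action_on_two_torus
    (m n : ℕ) (hm : 0 < m) (hn : 0 < n) (a b c : ℤ)
    (ω : ZMod m × ZMod n → ZMod m × ZMod n → ZMod m × ZMod n → Circle)
    (hω : ∀ i j k : ZMod m × ZMod n,
      ω i j k =
        Circle.exp (2 * π *
            ((a * (i.1.val : ℤ) * (((j.1.val : ℤ) + (k.1.val : ℤ)).fdiv m) : ℤ) : ℝ) / m) *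
        Circle.exp (2 * π *
            ((b * (i.2.val : ℤ) * (((j.1.val : ℤ) + (k.1.val : ℤ)).fdiv m)
              + c * (i.2.val : ℤ) * (((j.2.val : ℤ) + (k.2.val : ℤ)).fdiv n) : ℤ) : ℝ) / n)) :
    ∃ (φ : ZMod m × ZMod n → (Circle × Circle ≃ₜ Circle × Circle))
      (μ : ZMod m × ZMod n → ZMod m × ZMod n → C(Circle × Circle, Circle)),
      φ 0 = Homeomorph.refl (Circle × Circle) ∧
      (∀ g h x, φ (g + h) x = φ g (φ h x)) ∧
      (∀ g h, g = 0 ∨ h = 0 → μ g h = 1) ∧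
      (∀ g h k x,
        ω g h k * μ (g + h) k x * μ g h x = μ g (h + k) x * μ h k ((φ g).symm x)) := by
  have : NeZero m := ⟨hm.ne'⟩
  have : NeZero n := ⟨hn.ne'⟩
  refine ⟨fun g => (Homeomorph.mulLeft (ZMod.toCircle g.1)).prodCongr
      (Homeomorph.mulLeft (ZMod.toCircle g.2)),
    fun g h => ⟨fun x => x.1 ^ (-(a * carryZ m g.1 h.1)) *
      x.2 ^ (-(b * carryZ m g.1 h.1 + c * carryZ n g.2 h.2)), by fun_prop⟩, ?_, ?_, ?_, ?_⟩
  · ext x <;> simp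
  · intro g h x
    ext <;> simp [AddChar.map_add_eq_mul, mul_assoc]
  · intro g h hgh
    have h1 : carryZ m g.1 h.1 = 0 := carryZ_zero m _ _ (by rcases hgh with h | h <;> simp [h])
    have h2 : carryZ n g.2 h.2 = 0 := carryZ_zero n _ _ (by rcases hgh with h | h <;> simp [h])
    ext x
    simp [h1, h2]
  · intro g h k x
    obtain ⟨z, w⟩ := x
    have hw : ω g h k = (ZMod.toCircle g.1) ^ (a * carryZ m h.1 k.1) *
        (ZMod.toCircle g.2) ^ (b * carryZ m h.1 k.1 + c * carryZ n h.2 k.2) := by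
      rw [hω, toCircle_zpow_eq, toCircle_zpow_eq]
      unfold carryZ
      congr 4 <;> · congr 1; ring
    have c1 := carryZ_cocycle m g.1 h.1 k.1
    have c2 := carryZ_cocycle n g.2 h.2 k.2
    have e1 : carryZ m (g.1 + h.1) k.1 =
      carryZ m g.1 (h.1 + k.1) + carryZ m h.1 k.1 - carryZ m g.1 h.1 := by linarith
    have e2 : carryZ n (g.2 + h.2) k.2 =
      carryZ n g.2 (h.2 + k.2) + carryZ n h.2 k.2 - carryZ n g.2 h.2 := by linarith
    have key : ∀ (u v z w : Circle) (p q p1 q1 p2 q2 p3 q3 : ℤ), p1 + p2 = p3 + p → 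
        q1 + q2 = q3 + q →
        u ^ p * v ^ q * (z ^ (-p1) * w ^ (-q1)) * (z ^ (-p2) * w ^ (-q2)) =
        z ^ (-p3) * w ^ (-q3) * ((u⁻¹ * z) ^ (-p) * (v⁻¹ * w) ^ (-q)) := by
      intro u v z w p q p1 q1 p2 q2 p3 q3 hp hq
      obtain rfl : p1 = p3 + p - p2 := by linarith
      obtain rfl : q1 = q3 + q - q2 := by linarith
      simp only [mul_zpow, inv_zpow, zpow_neg, zpow_sub, zpow_add, inv_inv, mul_inv_rev]
      have A : ∀ U V Z W P Q R S : Circle,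
        U * V * (R * (Z⁻¹ * P⁻¹) * (S * (W⁻¹ * Q⁻¹))) * (R⁻¹ * S⁻¹) =
          P⁻¹ * Q⁻¹ * (Z⁻¹ * U * (W⁻¹ * V)) := by
        intro U V Z W P Q R S
        have B : U * V * (R * (Z⁻¹ * P⁻¹) * (S * (W⁻¹ * Q⁻¹))) * (R⁻¹ * S⁻¹) =
          (R * R⁻¹) * (S * S⁻¹) * (P⁻¹ * Q⁻¹ * (Z⁻¹ * U * (W⁻¹ * V))) := by ac_rfl
        rw [B, mul_inv_cancel, mul_inv_cancel, one_mul, one_mul]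
      exact A _ _ _ _ _ _ _ _
    rw [hw]
    refine key (ZMod.toCircle g.1) (ZMod.toCircle g.2) z w _ _ _ _ _ _ _ _ ?_ ?_
    · simp only [Prod.fst_add, e1]; ring
    · simp only [Prod.fst_add, Prod.snd_add, e1, e2]; ring
end

section
/- Let p be a prime and let G be the underlying additive group of ℤ[1/p] (the localization of the ring ℤ away from p), i.e., the group of p-adic fractions m/p^j under addition. Then for every integer k ≥ 2, the group cohomology H^k(G, U(1)) with U(1) as a trivial G-module vanishes. -/
open CategoryTheory Finsupp groupHomology

/-- The additive group `ℤ[1/p]` of `p`-adic fractions, written multiplicatively so that it can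
be used as the group in group cohomology. -/
abbrev PadicFractions (p : ℕ) : Type :=
  Multiplicative (Localization.Away (p : ℤ))
namespace PadicAux

/-- Contracting homotopy of the chains with coefficients in the left regular representation. -/
noncomputable def h (G : Type) [Group G] (n : ℕ) :
    ((Fin n → G) →₀ MonoidAlgebra ℤ G) →ₗ[ℤ] ((Fin (n + 1) → G) →₀ MonoidAlgebra ℤ G) :=
  Finsupp.lsum (R := ℤ) ℤ fun g =>
    (Finsupp.lsum (R := ℤ) ℤ fun x : G =>
      (Finsupp.lsingle (Fin.cons x⁻¹ g : Fin (n + 1) → G) ∘ₗ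
        LinearMap.toSpanSingleton ℤ (MonoidAlgebra ℤ G) (MonoidAlgebra.single 1 1))) ∘ₗ
      (MonoidAlgebra.coeffLinearEquiv ℤ).toLinearMap

lemma h_single (G : Type) [Group G] (n : ℕ) (g : Fin n → G) (x : G) (r : ℤ) :
    h G n (Finsupp.single g (MonoidAlgebra.single x r)) =
      Finsupp.single (Fin.cons x⁻¹ g) (MonoidAlgebra.single 1 r) := by
  simp [h]

lemma contract_zero {G : Type} [Group G] (m : ℕ) (y : G) (g : Fin (m + 1) → G) :
    Fin.contractNth 0 (· * ·) (Fin.cons y g : Fin (m + 2) → G) =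
      Fin.cons (y * g 0) (fun i => g i.succ) := by
  funext i
  refine Fin.cases ?_ (fun i => ?_) i
  · rw [Fin.contractNth_apply_of_eq _ _ _ _ (by simp)]; simp
  · rw [Fin.contractNth_apply_of_gt _ _ _ _ (by simp)]; simp

lemma contract_succ {G : Type} [Group G] (m : ℕ) (y : G) (g : Fin (m + 1) → G) (j : Fin (m + 1)) :
    Fin.contractNth j.succ (· * ·) (Fin.cons y g : Fin (m + 2) → G) =
      Fin.cons y (Fin.contractNth j (· * ·) g) := by
  funext i
  refine Fin.cases ?_ (fun i => ?_) i
  · rw [Fin.contractNth_apply_of_lt _ _ _ _ (by simp)]; simp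
  · rcases lt_trichotomy (i : ℕ) j with hh | hh | hh
    · rw [Fin.contractNth_apply_of_lt _ _ _ _ (by simpa using hh)]
      simp [Fin.contractNth_apply_of_lt _ _ _ _ hh]
    · rw [Fin.contractNth_apply_of_eq _ _ _ _ (by simpa using hh)]
      simp [Fin.contractNth_apply_of_eq _ _ _ _ hh]
    · rw [Fin.contractNth_apply_of_gt _ _ _ _ (by simpa using hh)]
      simp [Fin.contractNth_apply_of_gt _ _ _ _ hh]

lemma homotopy (G : Type) [Group G] (m : ℕ) (z : (Fin (m + 1) → G) →₀ MonoidAlgebra ℤ G) :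
    (inhomogeneousChains.d (Rep.leftRegular ℤ G) (m + 1)).hom (h G (m + 1) z) +
      h G m ((inhomogeneousChains.d (Rep.leftRegular ℤ G) m).hom z) = z := by
  induction z using Finsupp.induction_linear with
  | zero => simp
  | add a b ha hb =>
    rw [map_add, map_add, map_add, map_add]
    conv_rhs => rw [← ha, ← hb]
    abel
  | single g a =>
    induction a using MonoidAlgebra.induction_linear with
    | zero => simp
    | add a b ha hb =>
      rw [Finsupp.single_add, map_add, map_add, map_add, map_add]
      conv_rhs => rw [← ha, ← hb]
      abel
    | single x r =>
      rw [h_single]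
      erw [inhomogeneousChains.d_single, inhomogeneousChains.d_single]
      rw [Fin.sum_univ_succ, map_add, map_sum]
      simp only [contract_zero, contract_succ, map_smul, h_single, Fin.cons_succ, Fin.cons_zero]
      have e1 : ((Rep.leftRegular ℤ G).ρ (x⁻¹)⁻¹) (MonoidAlgebra.single 1 r) = MonoidAlgebra.single x r := by
        simp
      have e2 : ((Rep.leftRegular ℤ G).ρ (g 0)⁻¹) (MonoidAlgebra.single x r) = MonoidAlgebra.single ((g 0)⁻¹ * x) r := by
        simp
      rw [e1, e2, h_single]
      simp only [Fin.val_zero, Fin.val_succ, pow_succ, pow_zero, mul_neg, mul_one, neg_neg, neg_smul,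
        one_smul, Finset.sum_neg_distrib, mul_inv_rev, inv_inv]
      abel

lemma isZero_iff {G : Type} [Group G] (A : Rep.{0} ℤ G) (n : ℕ) :
    Limits.IsZero (groupHomology A (n + 1)) ↔
      ∀ z : (Fin (n + 1) → G) →₀ A, (inhomogeneousChains.d A n).hom z = 0 →
        ∃ w, (inhomogeneousChains.d A (n + 1)).hom w = z := by
  rw [groupHomology, ← HomologicalComplex.exactAt_iff_isZero_homology,
    HomologicalComplex.exactAt_iff' _ (n + 2) (n + 1) n (by simp) (by simp),
    ShortComplex.moduleCat_exact_iff]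
  have h1 : ∀ z : (Fin (n + 1) → G) →₀ A, ((inhomogeneousChains A).d (n + 1) n).hom z =
      (inhomogeneousChains.d A n).hom z := by
    intro z; rw [inhomogeneousChains.d_def]
  have h2 : ∀ z : (Fin (n + 2) → G) →₀ A, ((inhomogeneousChains A).d (n + 2) (n + 1)).hom z =
      (inhomogeneousChains.d A (n + 1)).hom z := by
    intro z; rw [inhomogeneousChains.d_def]
  constructor
  · intro H z hz
    obtain ⟨w, hw⟩ := H z ((h1 z).trans hz)
    exact ⟨w, (h2 w).symm.trans hw⟩
  · intro H z hz
    obtain ⟨w, hw⟩ := H z ((h1 z).symm.trans hz)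
    exact ⟨w, (h2 w).trans hw⟩

lemma isZero_leftRegular (G : Type) [Group G] (n : ℕ) :
    Limits.IsZero (groupHomology (Rep.leftRegular ℤ G) (n + 1)) := by
  rw [isZero_iff]
  intro z hz
  refine ⟨h G (n + 1) z, ?_⟩
  have := homotopy G n z
  rw [hz, map_zero, add_zero] at this
  exact this


/-- The infinite cyclic group. -/
abbrev Z := Multiplicative ℤ

noncomputable def t : Z := Multiplicative.ofAdd 1

lemma t_gen (x : Z) : x ∈ Subgroup.zpowers t := by
  refine ⟨Multiplicative.toAdd x, ?_⟩
  simp [t, ← ofAdd_zsmul]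

noncomputable def shiftLin : MonoidAlgebra ℤ Z →ₗ[ℤ] MonoidAlgebra ℤ Z :=
  Representation.leftRegular ℤ Z t - LinearMap.id

noncomputable def epsLin : MonoidAlgebra ℤ Z →ₗ[ℤ] ℤ :=
  (Finsupp.linearCombination ℤ (fun _ => (1 : ℤ))) ∘ₗ
        (MonoidAlgebra.coeffLinearEquiv ℤ).toLinearMap

lemma epsLin_single (g : Z) (r : ℤ) : epsLin (MonoidAlgebra.single g r) = r := by
  simp [epsLin]

lemma shiftLin_single (g : Z) (r : ℤ) : shiftLin (MonoidAlgebra.single g r) =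
    MonoidAlgebra.single (t * g) r - MonoidAlgebra.single g r := by
  simp [shiftLin]

noncomputable def shift : Rep.leftRegular ℤ Z ⟶ Rep.leftRegular ℤ Z :=
  Rep.ofHom ⟨shiftLin, by
    intro g
    refine LinearMap.ext fun x => ?_
    induction x using MonoidAlgebra.induction_linear with
    | zero => simp
    | add a b ha hb => rw [map_add, map_add, ha, hb]
    | single x r => simp [shiftLin, mul_left_comm]⟩

noncomputable def eps : Rep.leftRegular ℤ Z ⟶ Rep.trivial ℤ Z ℤ :=
  Rep.ofHom ⟨epsLin, by
    intro g
    refine LinearMap.ext fun x => ?_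
    induction x using MonoidAlgebra.induction_linear with
    | zero => simp
    | add a b ha hb => rw [map_add, map_add, ha, hb]
    | single x r => simp [epsLin]⟩

lemma shift_inj : Function.Injective shiftLin := by
  rw [injective_iff_map_eq_zero]
  intro x hx
  have hx' : Representation.leftRegular ℤ Z t x = x := by
    simpa [shiftLin, sub_eq_zero] using hx
  have hc := Representation.coeff_of_leftRegular_of_generator t t_gen x hx'
  obtain ⟨y, hy⟩ := Infinite.exists_notMem_finset x.coeff.support
  have hy0 : x.coeff y = 0 := by simpa using hy
  ext γ
  rw [hc γ, ← hc y, hy0]; simp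

lemma single_sub_mem (γ : Z) (r : ℤ) :
    MonoidAlgebra.single γ r - MonoidAlgebra.single 1 r ∈ LinearMap.range shiftLin := by
  obtain ⟨i, rfl⟩ := t_gen γ
  induction i with
  | zero => simp
  | succ n ih =>
    have := Submodule.add_mem _ ih ⟨MonoidAlgebra.single (t ^ (n : ℤ)) r, shiftLin_single _ _⟩
    convert this using 1
    simp only [zpow_add_one, mul_comm]
    abel
  | pred n ih =>
    have := Submodule.sub_mem _ ih ⟨MonoidAlgebra.single (t ^ (-n - 1 : ℤ)) r, shiftLin_single _ _⟩
    convert this using 1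
    rw [← zpow_one_add]
    simp

lemma ker_le (x : MonoidAlgebra ℤ Z) (hx : epsLin x = 0) : ∃ y, shiftLin y = x := by
  have key : x - MonoidAlgebra.single 1 (epsLin x) ∈ LinearMap.range shiftLin := by
    clear hx
    induction x using MonoidAlgebra.induction_linear with
    | zero => simp
    | add a b ha hb =>
      have := Submodule.add_mem _ ha hb
      convert this using 1
      rw [map_add, MonoidAlgebra.single_add]; abel
    | single g r => rw [epsLin_single]; exact single_sub_mem g r
  rw [hx] at key
  simpa using key

lemma shift_eps (y) : epsLin (shiftLin y) = 0 := by
  induction y using MonoidAlgebra.induction_linear with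
  | zero => simp
  | add a b ha hb => simp [ha, hb]
  | single g r => rw [shiftLin_single, map_sub, epsLin_single, epsLin_single, sub_self]

noncomputable def ses : ShortComplex (Rep.{0} ℤ Z) :=
  ShortComplex.mk shift eps (by
    ext x
    exact shift_eps _)

lemma rep_exact {k G : Type} [CommRing k] [Group G] (S : ShortComplex (Rep.{0} k G))
    (hS : ∀ x, S.g.hom x = 0 → ∃ y, S.f.hom y = x) : S.Exact := by
  rw [← ShortComplex.exact_map_iff_of_faithful _ (forget₂ (Rep.{0} k G) (ModuleCat.{0} k)),
    ShortComplex.moduleCat_exact_iff]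
  exact hS

lemma ses_exact : ses.ShortExact where
  exact := by
    apply rep_exact
    intro x hx
    exact ker_le x hx
  mono_f := (Rep.mono_iff_injective _).2 shift_inj
  epi_g := (Rep.epi_iff_surjective _).2 fun r => ⟨MonoidAlgebra.single 1 r, epsLin_single 1 r⟩

lemma isZero_Z (n : ℕ) : Limits.IsZero (groupHomology (Rep.trivial ℤ Z ℤ) (n + 2)) := by
  have := mono_δ_of_isZero ses_exact (n + 1) (isZero_leftRegular Z (n + 1))
  exact @Limits.IsZero.of_mono _ _ _ _ _ _ this (isZero_leftRegular Z n)

lemma exact_of_local {G : Type} [Group G] (n : ℕ)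
    (hG : ∀ S : Finset G, ∃ φ : Z →* G, Function.Injective φ ∧ ∀ x ∈ S, x ∈ φ.range)
    (z : (Fin (n + 2) → G) →₀ ℤ)
    (hz : (inhomogeneousChains.d (Rep.trivial ℤ G ℤ) (n + 1)).hom z = 0) :
    ∃ w, (inhomogeneousChains.d (Rep.trivial ℤ G ℤ) (n + 2)).hom w = z := by
  classical
  obtain ⟨φ, hφ, hS⟩ := hG (z.support.biUnion fun v => Finset.univ.image v)
  let ψ : Rep.trivial ℤ Z ℤ ⟶ Rep.res φ (Rep.trivial ℤ G ℤ) := Rep.ofHom ⟨LinearMap.id, fun _ => rfl⟩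
  have hcomm : ∀ (m : ℕ) (y : (Fin (m + 1) → Z) →₀ ℤ),
      (inhomogeneousChains.d (Rep.trivial ℤ G ℤ) m).hom (Finsupp.mapDomain (φ ∘ ·) y) =
        Finsupp.mapDomain (φ ∘ ·) ((inhomogeneousChains.d (Rep.trivial ℤ Z ℤ) m).hom y) := by
    intro m y
    induction y using Finsupp.induction_linear with
    | zero => simp
    | add a b ha hb => rw [Finsupp.mapDomain_add, map_add, map_add, Finsupp.mapDomain_add, ha, hb]
    | single g r =>
      rw [Finsupp.mapDomain_single]
      erw [inhomogeneousChains.d_single, inhomogeneousChains.d_single]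
      rw [Finsupp.mapDomain_add, Finsupp.mapDomain_finsetSum]
      simp only [Finsupp.mapDomain_smul, Finsupp.mapDomain_single, Fin.comp_contractNth, map_mul]
      rfl
  have hinj : ∀ m, Function.Injective (Finsupp.mapDomain (M := ℤ) (fun v : Fin m → Z => φ ∘ v)) :=
    fun m => Finsupp.mapDomain_injective hφ.comp_left
  obtain ⟨y, rfl⟩ : ∃ y : (Fin (n + 2) → Z) →₀ ℤ, Finsupp.mapDomain (φ ∘ ·) y = z := by
    refine ⟨Finsupp.comapDomain (φ ∘ ·) z (hφ.comp_left.injOn), ?_⟩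
    refine Finsupp.mapDomain_comapDomain _ hφ.comp_left _ ?_
    intro v hv
    have : ∀ i, ∃ a, φ a = v i := fun i => hS _ (Finset.mem_biUnion.2 ⟨v, hv, by simp⟩)
    choose a ha using this
    exact ⟨a, funext ha⟩
  rw [hcomm] at hz
  have hy := hinj _ (hz.trans Finsupp.mapDomain_zero.symm)
  obtain ⟨w, hw⟩ := (isZero_iff _ _).1 (isZero_Z n) y hy
  refine ⟨Finsupp.mapDomain (φ ∘ ·) w, ?_⟩
  rw [hcomm]
  exact congrArg _ hw


noncomputable instance divCircle : DivisibleBy (Additive Circle) ℤ where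
  div a n := Additive.ofMul (Circle.exp (Complex.arg (Additive.toMul a : Circle) / n))
  div_zero a := by simp
  div_cancel := by
    intro n a hn
    have hn' : (n : ℝ) ≠ 0 := by exact_mod_cast hn
    rw [← ofMul_zpow, ← Circle.exp_zsmul, zsmul_eq_mul, mul_div_cancel₀ _ hn', Circle.exp_arg]
    rfl

lemma extend {M N : Type} [AddCommGroup M] [AddCommGroup N]
    (d : M →ₗ[ℤ] N) (c : M →ₗ[ℤ] Additive Circle)
    (hc : LinearMap.ker d ≤ LinearMap.ker c) : ∃ b : N →ₗ[ℤ] Additive Circle, b ∘ₗ d = c := by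
  obtain ⟨b, hb⟩ := (Module.Baer.of_divisible (Additive Circle)).extension_property
    ((LinearMap.ker d).liftQ d le_rfl)
    (LinearMap.ker_eq_bot.1 (Submodule.ker_liftQ_eq_bot _ _ _ le_rfl))
    ((LinearMap.ker d).liftQ c hc)
  refine ⟨b, LinearMap.ext fun x => ?_⟩
  exact LinearMap.congr_fun hb (Submodule.Quotient.mk x)

lemma dual {G : Type} [Group G] (m : ℕ) (b : (Fin m → G) → Additive Circle)
    (g : Fin (m + 1) → G) :
    (inhomogeneousCochains.d (Rep.trivial ℤ G (Additive Circle)) m).hom b g =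
      Finsupp.linearCombination ℤ b
        ((inhomogeneousChains.d (Rep.trivial ℤ G ℤ) m).hom (Finsupp.single g (1 : ℤ))) := by
  erw [inhomogeneousChains.d_single]
  rw [inhomogeneousCochains.d_hom_apply, map_add, map_sum]
  simp only [map_smul]
  have e1 : ((Rep.trivial ℤ G ℤ).ρ (g 0)⁻¹) (1 : ℤ) = (1 : ℤ) := rfl
  erw [e1, Finsupp.linearCombination_single]
  simp only [Finsupp.linearCombination_single, one_smul]
  rfl

lemma dual' {G : Type} [Group G] (m : ℕ) (b : (Fin m → G) → Additive Circle)
    (z : (Fin (m + 1) → G) →₀ ℤ) :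
    Finsupp.linearCombination ℤ
      ((inhomogeneousCochains.d (Rep.trivial ℤ G (Additive Circle)) m).hom b :
        (Fin (m + 1) → G) → Additive Circle) z =
      Finsupp.linearCombination ℤ b ((inhomogeneousChains.d (Rep.trivial ℤ G ℤ) m).hom z) := by
  induction z using Finsupp.induction_linear with
  | zero => simp
  | add a b ha hb => rw [map_add, map_add, map_add, ha, hb]
  | single g r =>
    have : (Finsupp.single g r : (Fin (m + 1) → G) →₀ ℤ) = r • Finsupp.single g (1 : ℤ) := by simp
    rw [this, map_smul, map_smul, map_smul, ← dual, Finsupp.linearCombination_single, one_smul]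

lemma cohomology_vanishes {G : Type} [Group G] (n : ℕ)
    (hG : ∀ S : Finset G, ∃ φ : Z →* G, Function.Injective φ ∧ ∀ x ∈ S, x ∈ φ.range) :
    Subsingleton (groupCohomology (Rep.trivial ℤ G (Additive Circle)) (n + 2)) := by
  have key : ∀ c : (Fin (n + 2) → G) → Additive Circle,
      (inhomogeneousCochains.d (Rep.trivial ℤ G (Additive Circle)) (n + 2)).hom c = 0 →
      ∃ b, (inhomogeneousCochains.d (Rep.trivial ℤ G (Additive Circle)) (n + 1)).hom b = c := by
    intro c hc
    obtain ⟨b, hb⟩ := extend (inhomogeneousChains.d (Rep.trivial ℤ G ℤ) (n + 1)).hom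
      (Finsupp.linearCombination ℤ c) (by
        intro z hz
        obtain ⟨w, rfl⟩ := exact_of_local n hG z hz
        have := dual' (n + 2) c w
        rw [hc] at this
        rw [LinearMap.mem_ker]
        refine this.symm.trans ?_
        exact LinearMap.congr_fun (Finsupp.linearCombination_zero (M := Additive Circle) _ ℤ) w)
    refine ⟨fun v => b (Finsupp.single v (1 : ℤ)), ?_⟩
    funext g
    rw [dual]
    have e : Finsupp.linearCombination ℤ (fun v : Fin (n + 1) → G => b (Finsupp.single v (1 : ℤ))) = b := by
      ext v; simp
    rw [e]
    refine (LinearMap.congr_fun hb _).trans ?_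
    simp
  have hz : Limits.IsZero (groupCohomology (Rep.trivial ℤ G (Additive Circle)) (n + 2)) := by
    rw [groupCohomology, ← HomologicalComplex.exactAt_iff_isZero_homology,
      HomologicalComplex.exactAt_iff' _ (n + 1) (n + 2) (n + 3) (by simp) (by simp),
      ShortComplex.moduleCat_exact_iff]
    intro z hz
    have h1 : ∀ z : (Fin (n + 2) → G) → Additive Circle,
        ((groupCohomology.inhomogeneousCochains (Rep.trivial ℤ G (Additive Circle))).d
          (n + 2) (n + 3)).hom z =
        (inhomogeneousCochains.d (Rep.trivial ℤ G (Additive Circle)) (n + 2)).hom z := by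
      intro z; rw [groupCohomology.inhomogeneousCochains.d_def]
    have h2 : ∀ z : (Fin (n + 1) → G) → Additive Circle,
        ((groupCohomology.inhomogeneousCochains (Rep.trivial ℤ G (Additive Circle))).d
          (n + 1) (n + 2)).hom z =
        (inhomogeneousCochains.d (Rep.trivial ℤ G (Additive Circle)) (n + 1)).hom z := by
      intro z; rw [groupCohomology.inhomogeneousCochains.d_def]
    obtain ⟨w, hw⟩ := key z ((h1 z).symm.trans hz)
    exact ⟨w, (h2 w).trans hw⟩
  exact ModuleCat.subsingleton_of_isZero hz

lemma local_cyclic (p : ℕ) (hp : p.Prime) (S : Finset (PadicFractions p)) :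
    ∃ φ : Z →* PadicFractions p, Function.Injective φ ∧ ∀ x ∈ S, x ∈ φ.range := by
  classical
  let M := Submonoid.powers (p : ℤ)
  have hM : M ≤ nonZeroDivisors ℤ := powers_le_nonZeroDivisors_of_noZeroDivisors
    (by exact_mod_cast hp.ne_zero)
  let L := Localization.Away (p : ℤ)
  obtain ⟨b, hb⟩ := IsLocalization.exist_integer_multiples_of_finset (S := L) M
    (S.image Multiplicative.toAdd)
  have hu : IsUnit (algebraMap ℤ L b) := IsLocalization.map_units L b
  obtain ⟨u, hu⟩ := hu
  let φ : ℤ →+ L := (AddMonoidHom.mulRight (↑u⁻¹ : L)).comp (algebraMap ℤ L).toAddMonoidHom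
  have hφ : ∀ m, φ m = algebraMap ℤ L m * ↑u⁻¹ := fun m => rfl
  refine ⟨AddMonoidHom.toMultiplicative φ, ?_, ?_⟩
  · intro x y hxy
    have h1 : algebraMap ℤ L (Multiplicative.toAdd x) * ↑u⁻¹ =
      algebraMap ℤ L (Multiplicative.toAdd y) * ↑u⁻¹ := hxy
    have h2 := (Units.mul_left_inj u⁻¹).1 h1
    exact Multiplicative.toAdd.injective (IsLocalization.injective L hM h2)
  · intro x hx
    obtain ⟨m, hm⟩ := hb (Multiplicative.toAdd x) (Finset.mem_image_of_mem _ hx)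
    refine ⟨Multiplicative.ofAdd m, ?_⟩
    change Multiplicative.ofAdd (φ m) = x
    rw [hφ, hm, Algebra.smul_def, ← hu, mul_comm, ← mul_assoc, Units.inv_mul, one_mul]
    rfl

end PadicAux

theorem padic_fractions_cohomology_vanishes
    (p : ℕ) (hp : p.Prime) (k : ℕ) (hk : 2 ≤ k) :
    Subsingleton
      (groupCohomology (Rep.trivial ℤ (PadicFractions p) (Additive Circle)) k) := by
  obtain ⟨n, rfl⟩ := Nat.exists_eq_add_of_le' hk
  exact PadicAux.cohomology_vanishes n (PadicAux.local_cyclic p hp)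
end

section
/- Let n be a positive integer and ω a normalized U(1)-valued 3-cocycle on ℤ/nℤ. Then there exists a normalized 2-cochain c : ℤ × ℤ → U(1) such that dc(x,y,z) = ω(x mod n, y mod n, z mod n) for all integers x, y, z, and c(x,y) = 1 whenever both x and y are divisible by n. -/
/-- Solve the first-order recurrence `f (y + 1) = f y * a y` on the integers. -/
theorem exists_int_recurrence (a : ℤ → Circle) :
    ∃ f : ℤ → Circle, f 0 = 1 ∧ ∀ y, f (y + 1) = f y * a y := by
  refine ⟨fun y => (∏ j ∈ Finset.range y.toNat, a j) *
    (∏ j ∈ Finset.range (-y).toNat, a (-((j : ℤ) + 1)))⁻¹, by simp, ?_⟩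
  intro y
  rcases le_or_gt 0 y with h | h
  · obtain ⟨m, rfl⟩ := Int.eq_ofNat_of_zero_le h
    have h1 : ((m : ℤ) + 1).toNat = m + 1 := by omega
    have h2 : (-((m : ℤ) + 1)).toNat = 0 := by omega
    have h3 : (-(m : ℤ)).toNat = 0 := by omega
    simp only [h1, h2, h3, Int.toNat_natCast, Finset.prod_range_succ]
    simp
  · obtain ⟨m, rfl⟩ : ∃ m : ℕ, y = -((m : ℤ) + 1) := ⟨(-y - 1).toNat, by omega⟩
    have h1 : (-((m : ℤ) + 1)).toNat = 0 := by omega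
    have h2 : (-((m : ℤ) + 1) + 1).toNat = 0 := by omega
    have h3 : (-(-((m : ℤ) + 1))).toNat = m + 1 := by omega
    have h4 : (-(-((m : ℤ) + 1) + 1)).toNat = m := by omega
    simp only [h1, h2, h3, h4, Finset.prod_range_succ]
    simp

/-- **Statement 12** (Sections 3.1 and 4.3 of the paper, for `ρ : ℤ → ℤ/nℤ`).  Every
normalized `U(1)`-valued 3-cocycle on `ℤ/nℤ` pulls back along `ℤ → ℤ/nℤ` to the coboundary of
a normalized 2-cochain `c` on `ℤ` which is identically `1` on the kernel `nℤ`. -/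
theorem pullback_to_Z_trivializes
    (n : ℕ) (hn : 0 < n)
    (ω : ZMod n → ZMod n → ZMod n → Circle)
    (hω_norm : ∀ g h k, g = 0 ∨ h = 0 ∨ k = 0 → ω g h k = 1)
    (hω_coc : ∀ g₁ g₂ g₃ g₄,
      ω (g₁ + g₂) g₃ g₄ * ω g₁ g₂ (g₃ + g₄)
        = ω g₂ g₃ g₄ * ω g₁ (g₂ + g₃) g₄ * ω g₁ g₂ g₃) :
    ∃ c : ℤ → ℤ → Circle,
      (∀ x y, x = 0 ∨ y = 0 → c x y = 1) ∧
      (∀ x y z : ℤ,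
        (c y z)⁻¹ * c (x + y) z * (c x (y + z))⁻¹ * c x y
          = ω (x : ZMod n) (y : ZMod n) (z : ZMod n)) ∧
      (∀ x y : ℤ, (n : ℤ) ∣ x → (n : ℤ) ∣ y → c x y = 1) := by
  choose c hc0 hc using fun x : ℤ =>
    exists_int_recurrence (fun y => (ω (x : ZMod n) (y : ZMod n) 1)⁻¹)
  have hker : ∀ x : ℤ, (x : ZMod n) = 0 → ∀ y, c x y = 1 := by
    intro x hx y
    have hs : ∀ y, c x (y + 1) = c x y := by
      intro y
      rw [hc, hx, hω_norm _ _ _ (Or.inl rfl)]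
      simp
    induction y using Int.induction_on with
    | zero => exact hc0 x
    | succ i ih => rw [hs, ih]
    | pred i ih =>
      have := hs (-(i : ℤ) - 1)
      rw [sub_add_cancel] at this
      rw [← this, ih]
  refine ⟨c, ?_, ?_, ?_⟩
  · rintro x y (rfl | rfl)
    · exact hker 0 (by simp) y
    · exact hc0 x
  · have step : ∀ x y z : ℤ,
        (c y (z + 1))⁻¹ * c (x + y) (z + 1) * (c x (y + (z + 1)))⁻¹ * c x y
          * (ω (x : ZMod n) (y : ZMod n) ((z + 1 : ℤ) : ZMod n))⁻¹
        = (c y z)⁻¹ * c (x + y) z * (c x (y + z))⁻¹ * c x y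
          * (ω (x : ZMod n) (y : ZMod n) (z : ZMod n))⁻¹ := by
      intro x y z
      have h := hω_coc (x : ZMod n) y z 1
      rw [← add_assoc y z 1, hc, hc, hc]
      push_cast
      have h' : ω (x : ZMod n) y ((z : ZMod n) + 1)
          = (ω ((x : ZMod n) + y) z 1)⁻¹ *
            (ω (y : ZMod n) z 1 * ω (x : ZMod n) (y + z) 1 * ω (x : ZMod n) y z) := by
        rw [← h, inv_mul_cancel_left]
      rw [h']
      apply Circle.ext
      push_cast
      field_simp
    intro x y z
    rw [← mul_inv_eq_one]
    induction z using Int.induction_on with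
    | zero =>
      rw [hω_norm _ _ _ (Or.inr (Or.inr (by simp)))]
      simp [hc0]
    | succ i ih => rw [step, ih]
    | pred i ih =>
      have := step x y (-(i : ℤ) - 1)
      rw [sub_add_cancel] at this
      rw [← this, ih]
  · intro x y hx _
    exact hker x ((ZMod.intCast_zmod_eq_zero_iff_dvd x n).2 hx) y
end

section
/- Let n be a positive integer, p a prime with p ≡ 1 (mod n), and let X_p be the p-adic solenoid, i.e., the Pontryagin dual of the discrete additive group ℤ[1/p] of p-adic fractions. Then for every normalized U(1)-valued 3-cocycle ω on ℤ/nℤ there exists an ω-anomalous action of ℤ/nℤ on C(X_p): an action of ℤ/nℤ on X_p by homeomorphisms g ↦ φ_g together with continuous functions μ(g,h) : X_p → U(1), with μ(g,h) constantly 1 whenever g or h is zero, satisfying ω(g,h,k)·μ(g+h,k)(x)·μ(g,h)(x) = μ(g,h+k)(x)·μ(h,k)(φ_g⁻¹(x)) for all g,h,k ∈ ℤ/nℤ and x ∈ X_p. -/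
instance (p : ℕ) : TopologicalSpace (PadicFractions p) := ⊥

instance (p : ℕ) : DiscreteTopology (PadicFractions p) := ⟨rfl⟩

/-- The `p`-adic solenoid: the Pontryagin dual of the discrete group `ℤ[1/p]` of `p`-adic
fractions. -/
abbrev PadicSolenoid (p : ℕ) : Type :=
  PontryaginDual (PadicFractions p)

theorem solenoid_aux_prod (n : ℕ) (ω : ZMod n → ZMod n → ZMod n → Circle)
    (hω_norm : ∀ g h k, g = 0 ∨ h = 0 ∨ k = 0 → ω g h k = 1)
    (hω_coc : ∀ g₁ g₂ g₃ g₄,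
      ω (g₁ + g₂) g₃ g₄ * ω g₁ g₂ (g₃ + g₄)
        = ω g₂ g₃ g₄ * ω g₁ (g₂ + g₃) g₄ * ω g₁ g₂ g₃) (g : ZMod n) (h k : ℕ) :
    ω g h k * (∏ j ∈ Finset.range k, ω (g + h) j 1) * (∏ j ∈ Finset.range h, ω g j 1)
      = (∏ j ∈ Finset.range k, ω h j 1) * (∏ j ∈ Finset.range (h + k), ω g j 1) := by
  induction k with
  | zero => simp [hω_norm]
  | succ k ih =>
    rw [← add_assoc, Finset.prod_range_succ, Finset.prod_range_succ _ k,
      Finset.prod_range_succ _ (h + k)]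
    have e := hω_coc g h k 1
    push_cast
    calc _ = (ω (g + h) k 1 * ω g h (k + 1)) * ((∏ j ∈ Finset.range k, ω (g + h) j 1)
              * (∏ j ∈ Finset.range h, ω g j 1)) := by ac_rfl
      _ = (ω h k 1 * ω g (h + k) 1) * (ω g h k * (∏ j ∈ Finset.range k, ω (g + h) j 1)
              * (∏ j ∈ Finset.range h, ω g j 1)) := by rw [e]; ac_rfl
      _ = _ := by rw [ih]; ac_rfl

theorem solenoid_aux_period (n : ℕ) (f : ZMod n → Circle) (m q : ℕ) :
    (∏ j ∈ Finset.range (m + n * q), f j)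
      = (∏ j ∈ Finset.range m, f j) * (∏ j ∈ Finset.range n, f j) ^ q := by
  induction q generalizing m with
  | zero => simp
  | succ q ih =>
    have h1 : m + n * (q + 1) = n + (m + n * q) := by ring
    rw [h1, Finset.prod_range_add]
    simp only [Nat.cast_add, CharP.cast_eq_zero, zero_add]
    rw [ih, pow_succ]
    ac_rfl

/-- **Statement 13** (Section 4.3 of the paper).  For `p ≡ 1 (mod n)` prime, every normalized
`U(1)`-valued 3-cocycle `ω` on `ℤ/nℤ` is realized by an `ω`-anomalous action of `ℤ/nℤ` on
`C(X_p)`, where `X_p` is the `p`-adic solenoid: there are an action of `ℤ/nℤ` on `X_p` by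
homeomorphisms `g ↦ φ g` and normalized continuous functions `μ g h : X_p → U(1)` satisfying
the anomalous cocycle equation. -/
theorem anomalous_action_on_solenoid
    (n : ℕ) (hn : 0 < n) (p : ℕ) (hp : p.Prime) (hpn : (p : ZMod n) = 1)
    (ω : ZMod n → ZMod n → ZMod n → Circle)
    (hω_norm : ∀ g h k, g = 0 ∨ h = 0 ∨ k = 0 → ω g h k = 1)
    (hω_coc : ∀ g₁ g₂ g₃ g₄,
      ω (g₁ + g₂) g₃ g₄ * ω g₁ g₂ (g₃ + g₄)
        = ω g₂ g₃ g₄ * ω g₁ (g₂ + g₃) g₄ * ω g₁ g₂ g₃) :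
    ∃ (φ : ZMod n → (PadicSolenoid p ≃ₜ PadicSolenoid p))
      (μ : ZMod n → ZMod n → C(PadicSolenoid p, Circle)),
      φ 0 = Homeomorph.refl (PadicSolenoid p) ∧
      (∀ g h x, φ (g + h) x = φ g (φ h x)) ∧
      (∀ g h, g = 0 ∨ h = 0 → μ g h = 1) ∧
      (∀ g h k x,
        ω g h k * μ (g + h) k x * μ g h x = μ g (h + k) x * μ h k ((φ g).symm x)) := by
  have : NeZero n := ⟨hn.ne'⟩
  let s : ZMod n → Circle := fun g => ∏ j ∈ Finset.range n, ω g j 1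
  let C : ZMod n → ℕ → Circle := fun g m => ∏ j ∈ Finset.range m, ω g j 1
  have key : ∀ g h k : ZMod n, ω g h k * C (g + h) k.val * C g h.val
      = C h k.val * C g (h.val + k.val) := by
    intro g h k
    have := solenoid_aux_prod n ω hω_norm hω_coc g h.val k.val
    simpa only [ZMod.natCast_zmod_val] using this
  have per : ∀ g m q, C g (m + n * q) = C g m * s g ^ q := fun g m q =>
    solenoid_aux_period n (fun j => ω g j 1) m q
  have s_add : ∀ g h, s (g + h) = s g * s h := by
    intro g h
    have := solenoid_aux_prod n ω hω_norm hω_coc g h.val n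
    simp only [ZMod.natCast_zmod_val, CharP.cast_eq_zero] at this
    rw [hω_norm g h 0 (by simp), one_mul] at this
    have p1 := per g h.val 1
    rw [mul_one, pow_one] at p1
    change s (g + h) * C g h.val = s h * C g (h.val + n) at this
    rw [p1] at this
    apply mul_right_cancel (b := C g h.val)
    rw [this]; ac_rfl
  have s_zero : s 0 = 1 := by
    simp [s, hω_norm]
  have C_zero : ∀ m, C 0 m = 1 := by
    intro m; simp [C, hω_norm]
  let ρ : Localization.Away (p : ℤ) →+* ZMod n :=
    IsLocalization.Away.lift (S := Localization.Away (p : ℤ)) (p : ℤ)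
      (g := Int.castRingHom (ZMod n)) (by simp [hpn])
  let χ : ZMod n → PadicSolenoid p := fun g =>
    { toFun := fun q => s (g * ρ q.toAdd)
      map_one' := by simp [s_zero]
      map_mul' := by intro a b; simp [mul_add, s_add]
      continuous_toFun := continuous_of_discreteTopology }
  have χ_apply : ∀ g q, χ g q = s (g * ρ q.toAdd) := fun _ _ => rfl
  have χ_add : ∀ g h, χ (g + h) = χ g * χ h := by
    intro g h
    apply ContinuousMonoidHom.ext
    intro q
    change s ((g + h) * ρ q.toAdd) = s (g * ρ q.toAdd) * s (h * ρ q.toAdd)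
    rw [add_mul, s_add]
  have χ_zero : χ 0 = 1 := by
    have := χ_add 0 0
    simpa using this
  let u : PadicFractions p := Multiplicative.ofAdd 1
  have χ_u : ∀ g, χ g u = s g := by
    intro g; rw [χ_apply]; simp [u]
  have ev_cont : Continuous (fun x : PadicSolenoid p => x u) :=
    (continuous_eval_const (F := C(PadicFractions p, Circle)) u).comp
      (ContinuousMonoidHom.isInducing_toContinuousMap (PadicFractions p) Circle).continuous
  let ev : C(PadicSolenoid p, Circle) := ⟨fun x => x u, ev_cont⟩
  refine ⟨fun g => (Homeomorph.mulLeft (χ g)).symm, fun g h =>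
    ContinuousMap.const _ (C g h.val) * ev ^ ((g.val + h.val) / n), ?_, ?_, ?_, ?_⟩
  · ext1 x
    change (χ 0)⁻¹ * x = x
    rw [χ_zero, inv_one, one_mul]
  · intro g h x
    change (χ (g + h))⁻¹ * x = (χ g)⁻¹ * ((χ h)⁻¹ * x)
    rw [χ_add, mul_inv, mul_assoc]
  · rintro g h (rfl | rfl)
    · ext1 x
      simp [C_zero, Nat.div_eq_of_lt (ZMod.val_lt h)]
    · ext1 x
      simp [C, Nat.div_eq_of_lt (ZMod.val_lt g)]
  · intro g h k x
    have hx : ev (χ g * x) = s g * ev x := by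
      rw [← χ_u]; rfl
    simp only [ContinuousMap.mul_apply, ContinuousMap.const_apply, ContinuousMap.pow_apply,
      Homeomorph.symm_symm, Homeomorph.coe_mulLeft, hx]
    have carry : ((g + h).val + k.val) / n + (g.val + h.val) / n
        = (g.val + (h + k).val) / n + (h.val + k.val) / n := by
      rw [ZMod.val_add, ZMod.val_add, ← Nat.add_mul_div_left _ _ hn,
        ← Nat.add_mul_div_left _ _ hn]
      have a1 := Nat.mod_add_div (g.val + h.val) n
      have a2 := Nat.mod_add_div (h.val + k.val) n
      congr 1
      omega
    have hC : C g (h.val + k.val) = C g (h + k).val * s g ^ ((h.val + k.val) / n) := by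
      rw [← per, ZMod.val_add, Nat.mod_add_div]
    calc _ = (ω g h k * C (g + h) k.val * C g h.val) *
          ev x ^ (((g + h).val + k.val) / n + (g.val + h.val) / n) := by
            rw [pow_add]; ac_rfl
      _ = _ := by
            rw [key, carry, hC, pow_add, mul_pow]
            generalize ev x ^ ((h.val + k.val) / n) = a
            generalize ev x ^ ((g.val + (h + k).val) / n) = b
            ac_rfl
end

section
/- Let G and Q be groups, ρ : G → Q a group homomorphism with kernel K, ω a normalized U(1)-valued 3-cocycle on Q, and c : G × G → U(1) a normalized 2-cochain with dc(f,g,h) = ω(ρ(f),ρ(g),ρ(h)) for all f,g,h ∈ G. Then for all g ∈ G and all k, l ∈ K: c(g,k)·c(gkg⁻¹,g)⁻¹·c(g,l)·c(glg⁻¹,g)⁻¹ = c(g,kl)·c(k,l)·c(gklg⁻¹,g)⁻¹·c(gkg⁻¹,glg⁻¹)⁻¹. -/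
theorem aux_add {A : Type*} [AddCommGroup A] (gk x4 gl x5 gKL kl x1 x2 gkl x3 : A)
    (h1 : -kl + gkl + -gKL + gk = 0) (h2 : -gl + gkl + -x3 + x4 = 0)
    (h3 : -x5 + x1 + -x3 + x2 = 0) :
    gk + -x4 + gl + -x5 = gKL + kl + -x1 + -x2 := by
  rw [← sub_eq_zero]
  have h : (-kl + gkl + -gKL + gk) - (-gl + gkl + -x3 + x4)
      + (-x5 + x1 + -x3 + x2) = 0 := by rw [h1, h2, h3]; simp
  rw [← h]
  abel

/-- **Statement 14** (key computation in Lemma 3.2 of the paper).  If `c` is a normalized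
`U(1)`-valued 2-cochain on `G` whose coboundary is the pullback along `ρ : G → Q` of a
normalized 3-cocycle `ω` on `Q`, then for all `g ∈ G` and `k, l ∈ K = ker ρ`:
`c(g,k)·c(gkg⁻¹,g)⁻¹·c(g,l)·c(glg⁻¹,g)⁻¹ = c(g,kl)·c(k,l)·c(gklg⁻¹,g)⁻¹·c(gkg⁻¹,glg⁻¹)⁻¹`. -/
theorem jones_multiplicativity_identity
    {G Q : Type*} [Group G] [Group Q] (ρ : G →* Q)
    (ω : Q → Q → Q → Circle)
    (hω_norm : ∀ g h k, g = 1 ∨ h = 1 ∨ k = 1 → ω g h k = 1)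
    (hω_coc : ∀ g₁ g₂ g₃ g₄,
      ω (g₁ * g₂) g₃ g₄ * ω g₁ g₂ (g₃ * g₄)
        = ω g₂ g₃ g₄ * ω g₁ (g₂ * g₃) g₄ * ω g₁ g₂ g₃)
    (c : G → G → Circle)
    (hc_norm : ∀ g h, g = 1 ∨ h = 1 → c g h = 1)
    (hdc : ∀ f g h : G,
      (c g h)⁻¹ * c (f * g) h * (c f (g * h))⁻¹ * c f g = ω (ρ f) (ρ g) (ρ h)) :
    ∀ (g k l : G), k ∈ ρ.ker → l ∈ ρ.ker →
      c g k * (c (g * k * g⁻¹) g)⁻¹ * c g l * (c (g * l * g⁻¹) g)⁻¹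
        = c g (k * l) * c k l * (c (g * (k * l) * g⁻¹) g)⁻¹
            * (c (g * k * g⁻¹) (g * l * g⁻¹))⁻¹ := by
  intro g k l hk hl
  rw [MonoidHom.mem_ker] at hk hl
  have hk' : ρ (g * k * g⁻¹) = 1 := by simp [hk]
  have h1 := hdc g k l
  have h2 := hdc (g * k * g⁻¹) g l
  have h3 := hdc (g * k * g⁻¹) (g * l * g⁻¹) g
  rw [hω_norm _ _ _ (by simp [hk])] at h1
  rw [hω_norm _ _ _ (Or.inl hk')] at h2 h3
  have e1 : g * k * g⁻¹ * g = g * k := by group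
  have e2 : g * l * g⁻¹ * g = g * l := by group
  have e3 : g * k * g⁻¹ * (g * l * g⁻¹) = g * (k * l) * g⁻¹ := by group
  rw [e1] at h2
  rw [e2, e3] at h3
  exact aux_add (A := Additive Circle) _ _ _ _ _ _ _ _ _ _ h1 h2 h3
end

section
/- Let G and Q be groups, ρ : G → Q a group homomorphism with kernel K, ω a normalized U(1)-valued 3-cocycle on Q, and c : G × G → U(1) a normalized 2-cochain with dc(f,g,h) = ω(ρ(f),ρ(g),ρ(h)) for all f,g,h ∈ G. Then for all g ∈ G and k ∈ K: c(k,k⁻¹)⁻¹·c(g,k⁻¹)·c(gk⁻¹g⁻¹,g)⁻¹ = c(gkg⁻¹,gk⁻¹g⁻¹)⁻¹·c(gkg⁻¹,g)·c(g,k)⁻¹. -/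
theorem star_aux {A : Type*} [AddCommGroup A] (gk kki gkki bgk gki bg ab ag ba : A)
    (h1 : -kki + gkki + gk = 0) (h2 : -gkki + gki + -bg + bgk = 0)
    (h3 : -ag + -bgk + ba = 0) (h4 : -ba + ab = 0) :
    -kki + gki + -bg = -ab + ag + -gk := by
  grind

/-- **Statement 16** (proved in Lemma 3.2 of the paper; it establishes that the automorphisms
`α_q` of the twisted crossed product are ⋆-preserving).  If `c` is a normalized `U(1)`-valued
2-cochain on `G` whose coboundary is the pullback along `ρ : G → Q` of a normalized 3-cocycle
`ω` on `Q`, then for all `g ∈ G` and `k ∈ K = ker ρ`: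
`c(k,k⁻¹)⁻¹·c(g,k⁻¹)·c(gk⁻¹g⁻¹,g)⁻¹ = c(gkg⁻¹,gk⁻¹g⁻¹)⁻¹·c(gkg⁻¹,g)·c(g,k)⁻¹`. -/
theorem jones_star_identity
    {G Q : Type*} [Group G] [Group Q] (ρ : G →* Q)
    (ω : Q → Q → Q → Circle)
    (hω_norm : ∀ g h k, g = 1 ∨ h = 1 ∨ k = 1 → ω g h k = 1)
    (hω_coc : ∀ g₁ g₂ g₃ g₄,
      ω (g₁ * g₂) g₃ g₄ * ω g₁ g₂ (g₃ * g₄)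
        = ω g₂ g₃ g₄ * ω g₁ (g₂ * g₃) g₄ * ω g₁ g₂ g₃)
    (c : G → G → Circle)
    (hc_norm : ∀ g h, g = 1 ∨ h = 1 → c g h = 1)
    (hdc : ∀ f g h : G,
      (c g h)⁻¹ * c (f * g) h * (c f (g * h))⁻¹ * c f g = ω (ρ f) (ρ g) (ρ h)) :
    ∀ (g k : G), k ∈ ρ.ker →
      (c k k⁻¹)⁻¹ * c g k⁻¹ * (c (g * k⁻¹ * g⁻¹) g)⁻¹
        = (c (g * k * g⁻¹) (g * k⁻¹ * g⁻¹))⁻¹ * c (g * k * g⁻¹) g * (c g k)⁻¹ := by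
  intro g k hk
  have hk1 : ρ k = 1 := hk
  have h1 := hdc g k k⁻¹
  have h2 := hdc (g * k⁻¹ * g⁻¹) (g * k) k⁻¹
  have h3 := hdc (g * k⁻¹ * g⁻¹) (g * k * g⁻¹) g
  have h4 := hdc (g * k * g⁻¹) (g * k⁻¹ * g⁻¹) (g * k * g⁻¹)
  rw [hω_norm _ _ _ (by simp [hk1])] at h1 h2 h3 h4
  have e1 : g * k⁻¹ * g⁻¹ * (g * k) = g := by group
  have e2 : g * k⁻¹ * g⁻¹ * (g * k * g⁻¹) = 1 := by group
  have e3 : g * k * g⁻¹ * (g * k⁻¹ * g⁻¹) = 1 := by group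
  have e4 : g * k * g⁻¹ * g = g * k := by group
  have n1 : ∀ x, c 1 x = 1 := fun x => hc_norm _ _ (Or.inl rfl)
  have n2 : ∀ x, c x 1 = 1 := fun x => hc_norm _ _ (Or.inr rfl)
  rw [mul_inv_cancel, n2, inv_one, mul_one] at h1
  rw [e1, mul_inv_cancel_right] at h2
  rw [e2, e4, n1, mul_one] at h3
  rw [e2, e3, n1, n2, inv_one, mul_one, mul_one] at h4
  exact star_aux (A := Additive Circle) _ _ _ _ _ _ _ _ _ h1 h2 h3 h4
end
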